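/- arXiv:1511.04564 — 9 statements merged into one kernel-verified Lean document; each statement's English description precedes it below -/
import Mathlib

section
/- Let q = (q_1,…,q_d) ∈ ℕ^d satisfy gcd{q_1,…,q_d} = 1, let α ∈ ℝ^d and u ∈ {−1,1}^d, and suppose the Lissajous curve 𝔩^{(q)}_{α,u} is non-degenerate. For x ∈ ℝ^d let U(x) = {t ∈ [0,2π) : 𝔩^{(q)}_{α,u}(t) = x}. Then the set of points x with #U(x) > 1 is finite, and for every x one has #U(x) ≤ 2^{d−1}. -/
/-!
If `liss q α u t = liss q α u s`, then in each coordinate `j` the two cosines agree, so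
`q j * t ≡ q j * s` or `q j * (t + s) ≡ 2 * α j` modulo `2π`.

* The first alternative cannot hold in every coordinate when `t ≠ s` lie in `[0, 2π)`, because the
  frequencies have gcd `1` (`angle_eq_of_gcd`).
* The second one cannot hold in every coordinate either: recentring the parameter at `(t + s) / 2`
  would turn every phase into a multiple of `π`, making the curve degenerate
  (`isDegenerate_of_reflect`).

Finiteness: when `t ≠ s`, some coordinate confines `t - s`, and another one `t + s`, to a finite
set, so only finitely many parameters `t` occur in self-intersections.

Cardinality: given `x`, a parameter `t ∈ U x` is determined by the set
`signSet q α t` of coordinates in which `sin (q j * t - α j) > 0`, since `x` fixes the cosines and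
hence the absolute values of the sines. Two parameters in `U x` cannot have complementary sign sets,
since then all the sines would be opposite and the second alternative would hold everywhere. A
family of subsets of `Fin d` containing no two complementary sets has at most `2 ^ (d - 1)` members
(`card_le_of_compl_notMem`).
-/

open Real Set

/-- The Lissajous curve 𝔩^{(q)}_{α,u}(t) = (u_1 cos(q_1 t − α_1), …, u_d cos(q_d t − α_d)). -/
noncomputable def liss {d : ℕ} (q : Fin d → ℕ) (α u : Fin d → ℝ) (t : ℝ) : Fin d → ℝ :=
  fun j => u j * Real.cos ((q j : ℝ) * t - α j)

/-- The curve is degenerate if a parameter shift turns it into a curve with zero phases. -/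
def IsDegenerate {d : ℕ} (q : Fin d → ℕ) (α u : Fin d → ℝ) : Prop :=
  ∃ t' : ℝ, ∃ u' : Fin d → ℝ, (∀ j, u' j = 1 ∨ u' j = -1) ∧
    ∀ t : ℝ, liss q α u (t - t') = liss q 0 u' t

/-- If all multiples `q j • θ` and `q j • ψ` agree, so do `θ` and `ψ`: the order of `θ - ψ` in
`ℝ / 2πℤ` divides every `q j`, hence their gcd. -/
lemma angle_eq_of_gcd {d : ℕ} {q : Fin d → ℕ} (hgcd : Finset.univ.gcd q = 1)
    {θ ψ : Real.Angle} (h : ∀ j, q j • θ = q j • ψ) : θ = ψ := by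
  have h1 : addOrderOf (θ - ψ) ∣ Finset.univ.gcd q := by
    refine Finset.dvd_gcd fun j _ => addOrderOf_dvd_of_nsmul_eq_zero ?_
    rw [nsmul_sub, h j, sub_self]
  rw [hgcd, Nat.dvd_one, AddMonoid.addOrderOf_eq_one_iff] at h1
  exact sub_eq_zero.mp h1

lemma eq_of_angle_eq {t s : ℝ} (ht : t ∈ Set.Ico (0 : ℝ) (2 * Real.pi))
    (hs : s ∈ Set.Ico (0 : ℝ) (2 * Real.pi)) (h : (t : Real.Angle) = s) : t = s := by
  obtain ⟨k, hk⟩ := Real.Angle.angle_eq_iff_two_pi_dvd_sub.mp h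
  have hp := Real.pi_pos
  have h1 : (k : ℝ) < 1 := by
    by_contra! hc
    nlinarith [ht.2, hs.1]
  have h2 : (-1 : ℝ) < k := by
    by_contra! hc
    nlinarith [ht.1, hs.2]
  have h3 : k < 1 := by exact_mod_cast h1
  have h4 : -1 < k := by exact_mod_cast h2
  obtain rfl : k = 0 := by omega
  simp at hk
  linarith

/-- If every coordinate is at an extremum of its cosine at the parameter `m`, then recentring at
`m` shows that the curve is degenerate. -/
lemma isDegenerate_of_sin_eq_zero {d : ℕ} {q : Fin d → ℕ} {α u : Fin d → ℝ}
    (hu : ∀ j, u j = 1 ∨ u j = -1) (m : ℝ) (h : ∀ j, Real.sin (q j * m - α j) = 0) :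
    IsDegenerate q α u := by
  refine ⟨-m, fun j => u j * Real.cos (q j * m - α j), fun j => ?_, fun t => ?_⟩
  · rcases hu j with h1 | h1 <;> rcases Real.sin_eq_zero_iff_cos_eq.mp (h j) with h2 | h2 <;>
      simp [h1, h2]
  · funext j
    have h1 : (q j : ℝ) * (t - -m) - α j = q j * t + (q j * m - α j) := by ring
    simp only [liss, h1, Real.cos_add, h j, Pi.zero_apply, sub_zero, mul_zero]
    ring

lemma isDegenerate_of_reflect {d : ℕ} {q : Fin d → ℕ} {α u : Fin d → ℝ}
    (hu : ∀ j, u j = 1 ∨ u j = -1) {t s : ℝ}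
    (h : ∀ j, ((q j * t - α j : ℝ) : Real.Angle) = -((q j * s - α j : ℝ) : Real.Angle)) :
    IsDegenerate q α u := by
  refine isDegenerate_of_sin_eq_zero hu ((t + s) / 2) fun j => ?_
  have h1 := h j
  rw [← Real.Angle.coe_neg] at h1
  obtain ⟨k, hk⟩ := Real.Angle.angle_eq_iff_two_pi_dvd_sub.mp h1
  rw [show (q j : ℝ) * ((t + s) / 2) - α j = k * Real.pi by linarith]
  exact Real.sin_int_mul_pi k

lemma cos_eq_of_liss_eq {d : ℕ} {q : Fin d → ℕ} {α u : Fin d → ℝ}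
    (hu : ∀ j, u j = 1 ∨ u j = -1) {t s : ℝ} (h : liss q α u t = liss q α u s) (j : Fin d) :
    Real.cos (q j * t - α j) = Real.cos (q j * s - α j) := by
  have h1 := congrFun h j
  have h2 : u j ≠ 0 := by rcases hu j with h | h <;> simp [h]
  exact mul_left_cancel₀ h2 h1

/-- Agreement of the angles `q j * t - α j` and `q j * s - α j` for all `j` forces `t = s`. -/
lemma eq_of_angles_eq {d : ℕ} {q : Fin d → ℕ} (hgcd : Finset.univ.gcd q = 1) {α : Fin d → ℝ}
    {t s : ℝ} (ht : t ∈ Set.Ico (0 : ℝ) (2 * Real.pi)) (hs : s ∈ Set.Ico (0 : ℝ) (2 * Real.pi))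
    (h : ∀ j, ((q j * t - α j : ℝ) : Real.Angle) = ((q j * s - α j : ℝ) : Real.Angle)) :
    t = s := by
  refine eq_of_angle_eq ht hs (angle_eq_of_gcd hgcd fun j => ?_)
  have h1 := h j
  rw [Real.Angle.coe_sub, Real.Angle.coe_sub, sub_left_inj] at h1
  rwa [Real.Angle.natCast_mul_eq_nsmul, Real.Angle.natCast_mul_eq_nsmul] at h1

lemma finite_residues {a : ℝ} (ha : 0 < a) (c l r : ℝ) :
    {v ∈ Set.Icc l r | ∃ k : ℤ, a * v - c = 2 * Real.pi * k}.Finite := by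
  have hp := Real.two_pi_pos
  refine ((Set.finite_Icc ⌈(a * l - c) / (2 * Real.pi)⌉ ⌊(a * r - c) / (2 * Real.pi)⌋).image
    fun k : ℤ => (2 * Real.pi * k + c) / a).subset ?_
  rintro v ⟨⟨h1, h2⟩, k, hk⟩
  refine ⟨k, ⟨Int.ceil_le.mpr ?_, Int.le_floor.mpr ?_⟩, ?_⟩
  · rw [div_le_iff₀ hp]
    nlinarith
  · rw [le_div_iff₀ hp]
    nlinarith
  · simp only
    rw [← hk]
    field_simp
    ring

/-- The coordinates in which the sine conjugate to the cosine is positive at the parameter `t`. -/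
noncomputable def signSet {d : ℕ} (q : Fin d → ℕ) (α : Fin d → ℝ) (t : ℝ) : Finset (Fin d) :=
  open Classical in Finset.univ.filter fun j => 0 < Real.sin (q j * t - α j)

lemma mem_signSet {d : ℕ} {q : Fin d → ℕ} {α : Fin d → ℝ} {t : ℝ} {j : Fin d} :
    j ∈ signSet q α t ↔ 0 < Real.sin (q j * t - α j) := by
  simp [signSet]

/-- With equal cosines, equal positivity of the sines forces equal angles; when both sines vanish
this uses that they have the same square. -/
lemma angle_eq_of_pos_iff {a b : ℝ} (hc : Real.cos a = Real.cos b)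
    (h : 0 < Real.sin a ↔ 0 < Real.sin b) : (a : Real.Angle) = b := by
  rcases Real.Angle.cos_eq_iff_coe_eq_or_eq_neg.mp hc with h1 | h1
  · exact h1
  · have h2 : Real.sin a = -Real.sin b := by
      rw [← Real.Angle.sin_coe a, h1, Real.Angle.sin_neg, Real.Angle.sin_coe]
    refine Real.Angle.cos_sin_inj hc ?_
    rcases lt_trichotomy (Real.sin b) 0 with h3 | h3 | h3
    · have := h.mp (by linarith)
      linarith
    · linarith
    · have := h.mpr h3
      linarith

lemma angle_eq_neg_of_pos_iff_not {a b : ℝ} (hc : Real.cos a = Real.cos b)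
    (h : 0 < Real.sin a ↔ ¬ 0 < Real.sin b) : (a : Real.Angle) = -(b : Real.Angle) := by
  rcases Real.Angle.cos_eq_iff_coe_eq_or_eq_neg.mp hc with h1 | h1
  · have h2 : Real.sin a = Real.sin b := by
      rw [← Real.Angle.sin_coe a, h1, Real.Angle.sin_coe]
    rw [h2] at h
    tauto
  · exact h1

/-- A family of subsets of a `d`-element set containing no two complementary members is disjoint
from the family of its complements, so it has at most half of the `2 ^ d` subsets. -/
lemma card_le_of_compl_notMem {d : ℕ} (hd : 0 < d) (I : Finset (Finset (Fin d)))
    (h : ∀ A ∈ I, Aᶜ ∉ I) : I.card ≤ 2 ^ (d - 1) := by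
  have h1 : Disjoint I (I.image compl) := by
    rw [Finset.disjoint_left]
    intro A hA hA'
    obtain ⟨B, hB, rfl⟩ := Finset.mem_image.mp hA'
    exact h B hB hA
  have h2 := Finset.card_le_univ (I ∪ I.image compl)
  rw [Finset.card_union_of_disjoint h1, Finset.card_image_of_injective _ compl_injective,
    Fintype.card_finset, Fintype.card_fin] at h2
  obtain ⟨e, rfl⟩ : ∃ e, d = e + 1 := ⟨d - 1, by omega⟩
  rw [pow_succ] at h2
  simp only [Nat.add_sub_cancel]
  omega

/-- Theorem 1.1 a): for a non-degenerate Lissajous curve with gcd of the frequencies equal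
to 1, the set of points hit more than once on `[0, 2π)` is finite, and every point is hit
at most `2^(d-1)` times. -/
theorem stmt_0 {d : ℕ} (hd : 0 < d) (q : Fin d → ℕ) (hq : ∀ j, 0 < q j)
    (hgcd : Finset.univ.gcd q = 1)
    (α u : Fin d → ℝ) (hu : ∀ j, u j = 1 ∨ u j = -1)
    (hnd : ¬ IsDegenerate q α u)
    (U : (Fin d → ℝ) → Set ℝ)
    (hU : ∀ x, U x = {t ∈ Set.Ico (0 : ℝ) (2 * Real.pi) | liss q α u t = x}) :
    {x : Fin d → ℝ | 1 < (U x).ncard}.Finite ∧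
      ∀ x : Fin d → ℝ, (U x).Finite ∧ (U x).ncard ≤ 2 ^ (d - 1) := by
  have hp := Real.pi_pos
  have hq' : ∀ j, (0 : ℝ) < q j := fun j => by exact_mod_cast hq j
  constructor
  ·
    -- `D` and `E` contain the possible differences `t - s` and sums `t + s`.
    let D : Set ℝ := ⋃ j, {v ∈ Set.Icc (-(4 * Real.pi)) (4 * Real.pi) |
      ∃ k : ℤ, (q j : ℝ) * v - 0 = 2 * Real.pi * k}
    let E : Set ℝ := ⋃ j, {v ∈ Set.Icc (-(4 * Real.pi)) (4 * Real.pi) |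
      ∃ k : ℤ, (q j : ℝ) * v - 2 * α j = 2 * Real.pi * k}
    have hD : D.Finite := Set.finite_iUnion fun j => finite_residues (hq' j) _ _ _
    have hE : E.Finite := Set.finite_iUnion fun j => finite_residues (hq' j) _ _ _
    refine ((hD.image2 (fun v w => (v + w) / 2) hE).image (liss q α u)).subset ?_
    intro x hx
    obtain ⟨t, ht, s, hs, hts⟩ := (Set.one_lt_ncard_iff_nontrivial_and_finite.mp hx).1
    rw [hU] at ht hs
    obtain ⟨ht, rfl⟩ := ht
    obtain ⟨hs, hst⟩ := hs
    have key := fun j => Real.Angle.cos_eq_iff_coe_eq_or_eq_neg.mp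
      (cos_eq_of_liss_eq hu hst.symm j)
    have hi : ∃ i, ((q i * t - α i : ℝ) : Real.Angle) ≠ -((q i * s - α i : ℝ) : Real.Angle) := by
      by_contra! hc
      exact hnd (isDegenerate_of_reflect hu hc)
    have hj : ∃ j, ((q j * t - α j : ℝ) : Real.Angle) ≠ ((q j * s - α j : ℝ) : Real.Angle) := by
      by_contra! hc
      exact hts (eq_of_angles_eq hgcd ht hs hc)
    obtain ⟨i, hi⟩ := hi
    obtain ⟨j, hj⟩ := hj
    have hi' := (key i).resolve_right hi
    have hj' := (key j).resolve_left hj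
    rw [← Real.Angle.coe_neg] at hj'
    obtain ⟨k, hk⟩ := Real.Angle.angle_eq_iff_two_pi_dvd_sub.mp hi'
    obtain ⟨l, hl⟩ := Real.Angle.angle_eq_iff_two_pi_dvd_sub.mp hj'
    obtain ⟨ht0, ht1⟩ := ht
    obtain ⟨hs0, hs1⟩ := hs
    refine ⟨t, ⟨t - s, Set.mem_iUnion.mpr ⟨i, ⟨by linarith, by linarith⟩, k, by linarith⟩,
      t + s, Set.mem_iUnion.mpr ⟨j, ⟨by linarith, by linarith⟩, l, by linarith⟩, ?_⟩, rfl⟩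
    simp only
    ring
  · intro x
    have hcos : ∀ t ∈ U x, ∀ s ∈ U x, ∀ j,
        Real.cos (q j * t - α j) = Real.cos (q j * s - α j) := by
      intro t ht s hs
      rw [hU] at ht hs
      exact cos_eq_of_liss_eq hu (ht.2.trans hs.2.symm)
    have hinj : Set.InjOn (signSet q α) (U x) := by
      intro t ht s hs h
      have ht' := ht
      have hs' := hs
      rw [hU] at ht' hs'
      refine eq_of_angles_eq hgcd (α := α) ht'.1 hs'.1 fun j => ?_
      refine angle_eq_of_pos_iff (hcos t ht s hs j) ?_
      rw [← mem_signSet, ← mem_signSet, h]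
    have hfin : (signSet q α '' U x).Finite := Set.toFinite _
    refine ⟨Set.Finite.of_finite_image hfin hinj, ?_⟩
    rw [← hinj.ncard_image, Set.ncard_eq_toFinset_card _ hfin]
    refine card_le_of_compl_notMem hd _ ?_
    simp only [Set.Finite.mem_toFinset]
    rintro _ ⟨t, ht, rfl⟩ ⟨s, hs, h⟩
    refine hnd (isDegenerate_of_reflect hu (t := s) (s := t) fun j => ?_)
    refine angle_eq_neg_of_pos_iff_not (hcos s hs t ht j) ?_
    rw [← mem_signSet, ← mem_signSet, h, Finset.mem_compl]
end

section
/- Let n ∈ ℕ^d have pairwise relatively prime entries, κ ∈ ℤ^d and u ∈ {−1,1}^d. (a) There exist κ′ = (κ′_1,…,κ′_d) with κ′_1 = 0 and κ′_i ∈ {0,1} for i ∈ {2,…,d}, an integer r′ ∈ ℤ and u′ ∈ {−1,1}^d such that ℓ^{(2n)}_{κ,u}(t − t^{(2n)}_{r′}) = ℓ^{(2n)}_{κ′,u′}(t) for all t ∈ ℝ. (b) There exist δ ∈ {0,1}^d, r″ ∈ ℤ and u″ ∈ {−1,1}^d such that ℓ^{(2n)}_{κ,u}(t − t^{(2n)}_{r″})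 = ℓ^{(2n)}_{κ″,u″}(t) for all t ∈ ℝ, where κ″_i = δ_i n_i for all i. -/
/-!
Since `Pc n j * t2n n r = r π / (2 n j)`, shifting the parameter by `t2n n r` replaces each `κ j`
by `κ j + r`, and a change of `κ j` by `2 n j m` only multiplies the `j`-th coordinate by
`(-1) ^ m`. Hence `κ` can be brought to `κ'` as soon as some `r` solves `κ j + r ≡ κ' j` modulo
`2 n j` for all `j` (`exists_lc2_shift`). The moduli `2 n j` are not pairwise coprime, so the
parities have to agree before the Chinese remainder theorem (`exists_crt`) applies modulo `n j`.
In the first part `r` is taken with the parity of `κ 0` and `κ' j` is the parity of `κ j + κ 0`. In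
the second part `κ j + r` only has to be a multiple of `n j`, and `δ j` is the parity of the
quotient.
-/


open Real Set

/-- p[n] = ∏_{j=1}^d n_j. -/
def Pp {d : ℕ} (n : Fin d → ℕ) : ℕ := ∏ j, n j

/-- p_i[n] = ∏_{j ≠ i} n_j. -/
def Pc {d : ℕ} (n : Fin d → ℕ) (i : Fin d) : ℕ := ∏ j ∈ Finset.univ.erase i, n j

/-- t^{(n)}_l = lπ/p[n]. -/
noncomputable def tn {d : ℕ} (n : Fin d → ℕ) (l : ℤ) : ℝ := (l : ℝ) * Real.pi / (Pp n : ℝ)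

/-- t^{(2n)}_l = lπ/(2p[n]). -/
noncomputable def t2n {d : ℕ} (n : Fin d → ℕ) (l : ℤ) : ℝ :=
  (l : ℝ) * Real.pi / (2 * (Pp n : ℝ))

/-- The Lissajous curve ℓ^{(2n)}_{κ,u}. -/
noncomputable def lc2 {d : ℕ} (n : Fin d → ℕ) (κ : Fin d → ℤ) (u : Fin d → ℝ) (t : ℝ) :
    Fin d → ℝ :=
  fun j => u j * Real.cos ((Pc n j : ℝ) * t - (κ j : ℝ) * Real.pi / (2 * (n j : ℝ)))

/-- The Lissajous curve ℓ^{(n)}_{κ,u}. -/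
noncomputable def lc1 {d : ℕ} (n : Fin d → ℕ) (κ : Fin d → ℤ) (u : Fin d → ℝ) (t : ℝ) :
    Fin d → ℝ :=
  fun j => u j * Real.cos ((Pc n j : ℝ) * t - (κ j : ℝ) * Real.pi / (n j : ℝ))

lemma exists_crt {d : ℕ} (n : Fin d → ℕ) (hcop : ∀ i j, i ≠ j → Nat.Coprime (n i) (n j))
    (c : Fin d → ℤ) : ∃ s : ℤ, ∀ i, (n i : ℤ) ∣ s - c i := by
  obtain ⟨s, hs⟩ := Ideal.exists_forall_sub_mem_ideal
    (I := fun i => Ideal.span {(n i : ℤ)})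
    (fun i j hij => (Ideal.isCoprime_span_singleton_iff _ _).2
      (Nat.isCoprime_iff_coprime.2 (hcop i j hij))) c
  exact ⟨s, fun i => Ideal.mem_span_singleton.1 (hs i)⟩

lemma Pc_mul_t2n {d : ℕ} (n : Fin d → ℕ) (hn : ∀ j, 0 < n j) (r : ℤ) (j : Fin d) :
    (Pc n j : ℝ) * t2n n r = r * Real.pi / (2 * (n j : ℝ)) := by
  have hP : (Pp n : ℝ) = n j * Pc n j := by
    exact_mod_cast (Finset.mul_prod_erase Finset.univ n (Finset.mem_univ j)).symm
  have hj : (n j : ℝ) ≠ 0 := by exact_mod_cast (hn j).ne'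
  have hc : (Pc n j : ℝ) ≠ 0 := by
    exact_mod_cast (Finset.prod_pos fun i _ => hn i).ne'
  rw [t2n, hP]
  field_simp

/-- A solution `r` of the congruences `κ j + r ≡ κ' j` modulo `2 n j` shifts the curve with
parameter `κ` to one with parameter `κ'`, up to signs. -/
lemma exists_lc2_shift {d : ℕ} (n : Fin d → ℕ) (hn : ∀ j, 0 < n j) (κ κ' : Fin d → ℤ)
    (u : Fin d → ℝ) (hu : ∀ j, u j = 1 ∨ u j = -1) (r : ℤ)
    (h : ∀ j, (2 * n j : ℤ) ∣ κ j + r - κ' j) :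
    ∃ u' : Fin d → ℝ, (∀ j, u' j = 1 ∨ u' j = -1) ∧
      ∀ t : ℝ, lc2 n κ u (t - t2n n r) = lc2 n κ' u' t := by
  choose m hm using h
  refine ⟨fun j => u j * (-1) ^ m j, fun j => ?_, fun t => ?_⟩
  · rcases hu j with h | h <;> rcases Int.even_or_odd (m j) with e | e <;>
      simp [h, e.neg_one_zpow]
  · funext j
    have hj : (n j : ℝ) ≠ 0 := by exact_mod_cast (hn j).ne'
    have hm' : (κ j : ℝ) + r - κ' j = 2 * n j * m j := by exact_mod_cast hm j
    have harg : (Pc n j : ℝ) * (t - t2n n r) - κ j * Real.pi / (2 * (n j : ℝ)) =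
        (Pc n j : ℝ) * t - κ' j * Real.pi / (2 * (n j : ℝ)) - m j * Real.pi := by
      rw [mul_sub, Pc_mul_t2n n hn]
      field_simp
      linear_combination -Real.pi * hm'
    simp only [lc2]
    rw [harg, Real.cos_sub_int_mul_pi, mul_assoc]

/-- Proposition 1.2: any curve ℓ^{(2n)}_{κ,u} can be brought by a parameter shift
t^{(2n)}_{r'} into a) a form with κ'_1 = 0 and κ'_i ∈ {0,1}, and b) a form with
κ''_i = δ_i n_i, δ ∈ {0,1}^d. -/
theorem stmt_2 {d : ℕ} (hd : 0 < d) (n : Fin d → ℕ) (hn : ∀ j, 0 < n j)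
    (hcop : ∀ i j, i ≠ j → Nat.Coprime (n i) (n j))
    (κ : Fin d → ℤ) (u : Fin d → ℝ) (hu : ∀ j, u j = 1 ∨ u j = -1) :
    (∃ κ' : Fin d → ℤ, κ' ⟨0, hd⟩ = 0 ∧ (∀ i, κ' i = 0 ∨ κ' i = 1) ∧
      ∃ r' : ℤ, ∃ u' : Fin d → ℝ, (∀ j, u' j = 1 ∨ u' j = -1) ∧
        ∀ t : ℝ, lc2 n κ u (t - t2n n r') = lc2 n κ' u' t) ∧
    (∃ δ : Fin d → ℕ, (∀ i, δ i = 0 ∨ δ i = 1) ∧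
      ∃ r'' : ℤ, ∃ u'' : Fin d → ℝ, (∀ j, u'' j = 1 ∨ u'' j = -1) ∧
        ∀ t : ℝ, lc2 n κ u (t - t2n n r'') = lc2 n (fun i => (δ i : ℤ) * (n i : ℤ)) u'' t) := by
  constructor
  · set k := κ ⟨0, hd⟩ with hk
    -- With `r = k + 2 * s` and `κ' i` the parity of `κ i + k`, the congruence modulo `2 * n i`
    -- becomes `s ≡ -((κ i + k) / 2)` modulo `n i`.
    obtain ⟨s, hs⟩ := exists_crt n hcop fun i => -((κ i + k) / 2)
    refine ⟨fun i => (κ i + k) % 2, by dsimp only; omega, fun i => Int.emod_two_eq_zero_or_one _,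
      k + 2 * s, exists_lc2_shift n hn κ _ u hu _ fun i => ?_⟩
    obtain ⟨m, hm⟩ := hs i
    refine ⟨m, ?_⟩
    linear_combination 2 * hm - Int.emod_add_mul_ediv (κ i + k) 2
  · obtain ⟨r, hr⟩ := exists_crt n hcop fun i => -κ i
    choose q hq using hr
    refine ⟨fun i => (q i % 2).toNat, fun i => by dsimp only; omega, r,
      exists_lc2_shift n hn κ _ u hu r fun i => ⟨q i / 2, ?_⟩⟩
    rw [Int.toNat_of_nonneg (Int.emod_nonneg _ two_ne_zero)]
    linear_combination hq i - (n i : ℤ) * Int.emod_add_mul_ediv (q i) 2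
end

section
/- Let n ∈ ℕ^d have pairwise relatively prime entries, κ ∈ ℤ^d and u ∈ {−1,1}^d. The Lissajous curve ℓ^{(2n)}_{κ,u} is degenerate if and only if κ_i ≡ κ_j (mod 2) for all i,j ∈ {1,…,d}. In this case there exist t′ ∈ ℝ and u′ ∈ {−1,1}^d such that ℓ^{(2n)}_{κ,u}(t − t′) = ℓ^{(n)}_{0,u′}(t) = (u′_1 cos(p_1[n]·t), …, u′_d cos(p_d[n]·t)) for all t ∈ ℝ. In particular, the curve ℓ^{(n)}_{κ,u} = ℓ^{(2n)}_{2κ,u} is always degenerate. -/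
/-!
The curve `lc2 n κ u` shifted by `t'` has the phase `P_j t' + κ_j π / (2 n_j)` in coordinate `j`,
where `P_j = Pc n j`, and it is a zero-phase curve exactly when each of these phases is a multiple
`m_j π`. Since `P_j n_j = p[n]`, putting `s = 2 p[n] t' / π` turns this into the system
`s + κ_j = 2 n_j m_j` for all `j`, with a single unknown `s`.

A solution `s` is an integer with the parity of every `κ_j`, so the `κ_j` all have the same parity
(`parity_of_LDeg2`; evaluating the curve at `t = 0` suffices to see that the phases are multiples
of `π`). Conversely, if `κ_j = κ_0 + 2 h_j`, the substitution `s = 2 r - κ_0` reduces the system to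
`r ≡ h_j (mod n_j)`, which the Chinese remainder theorem solves (`exists_shift`).
-/

open Real Set

/-- ℓ^{(2n)}_{κ,u} is degenerate: some parameter shift turns it into a zero-phase curve
with the same frequencies. -/
def LDeg2 {d : ℕ} (n : Fin d → ℕ) (κ : Fin d → ℤ) (u : Fin d → ℝ) : Prop :=
  ∃ t' : ℝ, ∃ u' : Fin d → ℝ, (∀ j, u' j = 1 ∨ u' j = -1) ∧
    ∀ t : ℝ, lc2 n κ u (t - t') = fun j => u' j * Real.cos ((Pc n j : ℝ) * t)

lemma Pc_mul_eq_Pp {d : ℕ} (n : Fin d → ℕ) (j : Fin d) : Pc n j * n j = Pp n :=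
  Finset.prod_erase_mul _ _ (Finset.mem_univ j)

lemma Pp_pos {d : ℕ} {n : Fin d → ℕ} (hn : ∀ j, 0 < n j) : 0 < Pp n :=
  Finset.prod_pos fun j _ => hn j

/-- The Chinese remainder theorem for a finite family of integer residues. -/
lemma exists_int_crt {d : ℕ} (n : Fin d → ℕ) (hn : ∀ j, 0 < n j)
    (hcop : ∀ i j, i ≠ j → Nat.Coprime (n i) (n j)) (h : Fin d → ℤ) :
    ∃ r : ℤ, ∀ j, (n j : ℤ) ∣ r - h j := by
  obtain ⟨k, hk⟩ := Nat.chineseRemainderOfFinset (fun j => (h j % (n j : ℤ)).toNat) n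
    Finset.univ (fun j _ => (hn j).ne') (fun i _ j _ hij => hcop i j hij)
  refine ⟨k, fun j => ?_⟩
  have h1 := Int.natCast_modEq_iff.mpr (hk j (Finset.mem_univ j))
  rw [Int.toNat_of_nonneg (Int.emod_nonneg _ (by exact_mod_cast (hn j).ne'))] at h1
  exact (h1.trans (Int.mod_modEq _ _)).symm.dvd

/-- If all `κ j` have the same parity, the system `s + κ j = 2 n_j m_j` has an integer solution. -/
lemma exists_shift {d : ℕ} (hd : 0 < d) (n : Fin d → ℕ) (hn : ∀ j, 0 < n j)
    (hcop : ∀ i j, i ≠ j → Nat.Coprime (n i) (n j)) (κ : Fin d → ℤ)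
    (hκ : ∀ i j, κ i ≡ κ j [ZMOD 2]) :
    ∃ (s : ℤ) (m : Fin d → ℤ), ∀ j, s + κ j = 2 * n j * m j := by
  choose h hh using fun j => (hκ j ⟨0, hd⟩).dvd
  obtain ⟨r, hr⟩ := exists_int_crt n hn hcop h
  choose m hm using hr
  refine ⟨2 * r - κ ⟨0, hd⟩, m, fun j => ?_⟩
  linear_combination 2 * hm j - hh j

/-- Equal parities make the shifted curve a zero-phase curve: the shift is `s π / (2 p[n])`, and the
phase `m_j π` it produces is absorbed into the sign `(-1) ^ m_j`. -/
lemma exists_degenerate {d : ℕ} (hd : 0 < d) (n : Fin d → ℕ) (hn : ∀ j, 0 < n j)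
    (hcop : ∀ i j, i ≠ j → Nat.Coprime (n i) (n j))
    (κ : Fin d → ℤ) (u : Fin d → ℝ) (hu : ∀ j, u j = 1 ∨ u j = -1)
    (hκ : ∀ i j, κ i ≡ κ j [ZMOD 2]) : LDeg2 n κ u := by
  obtain ⟨s, m, hs⟩ := exists_shift hd n hn hcop κ hκ
  refine ⟨t2n n s, fun j => u j * (-1) ^ m j, fun j => ?_, fun t => funext fun j => ?_⟩
  · rcases hu j with h | h <;> rcases Int.even_or_odd (m j) with h' | h' <;>
      simp [h, h'.neg_one_zpow]
  · have hn0 : (n j : ℝ) ≠ 0 := by exact_mod_cast (hn j).ne'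
    have hP0 : (Pp n : ℝ) ≠ 0 := by exact_mod_cast (Pp_pos hn).ne'
    have hP : (Pc n j : ℝ) * n j = Pp n := by exact_mod_cast Pc_mul_eq_Pp n j
    have hs' : (s : ℝ) + κ j = 2 * n j * m j := by exact_mod_cast hs j
    have hc0 : (Pc n j : ℝ) ≠ 0 := fun h => hP0 (by rw [← hP, h, zero_mul])
    have harg : (Pc n j : ℝ) * (t - t2n n s) - κ j * π / (2 * n j) = Pc n j * t - m j * π := by
      rw [t2n, ← hP]
      field_simp
      linear_combination -π * hs'
    rw [lc2, harg, Real.cos_sub_int_mul_pi, mul_assoc]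

/-- A degenerate curve has all `κ j` of the same parity: at `t = 0` its coordinates are `±1`, which
forces every phase to be a multiple of `π`. -/
lemma parity_of_LDeg2 {d : ℕ} (n : Fin d → ℕ) (hn : ∀ j, 0 < n j)
    (κ : Fin d → ℤ) (u : Fin d → ℝ) (hu : ∀ j, u j = 1 ∨ u j = -1)
    (h : LDeg2 n κ u) : ∀ i j, κ i ≡ κ j [ZMOD 2] := by
  obtain ⟨t', u', hu', h⟩ := h
  have key : ∀ j, ∃ m : ℤ, 2 * (Pp n : ℝ) * t' + κ j * π = 2 * n j * m * π := fun j => by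
    have h0 := congrFun (h 0) j
    simp only [lc2, mul_zero, Real.cos_zero, mul_one] at h0
    have hsq : Real.cos ((Pc n j : ℝ) * (0 - t') - κ j * π / (2 * n j)) ^ 2 = 1 := by
      have h1 : u j ^ 2 = 1 := by rcases hu j with h | h <;> simp [h]
      have h2 : u' j ^ 2 = 1 := by rcases hu' j with h | h <;> simp [h]
      rw [← h2, ← h0, mul_pow, h1, one_mul]
    have hsin : Real.sin ((Pc n j : ℝ) * (0 - t') - κ j * π / (2 * n j)) = 0 := by
      rw [← sq_eq_zero_iff, Real.sin_sq, hsq, sub_self]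
    obtain ⟨m, hm⟩ := Real.sin_eq_zero_iff.mp hsin
    have hn0 : (n j : ℝ) ≠ 0 := by exact_mod_cast (hn j).ne'
    have hP : (Pc n j : ℝ) * n j = Pp n := by exact_mod_cast Pc_mul_eq_Pp n j
    refine ⟨-m, ?_⟩
    rw [← hP]
    push_cast
    field_simp at hm
    linear_combination hm
  intro i j
  obtain ⟨a, ha⟩ := key i
  obtain ⟨b, hb⟩ := key j
  have hab : (κ j : ℝ) - κ i = 2 * (n j * b - n i * a) :=
    mul_right_cancel₀ Real.pi_ne_zero (by linear_combination hb - ha)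
  exact Int.modEq_iff_dvd.mpr ⟨n j * b - n i * a, by exact_mod_cast hab⟩

/-- Corollary 1.3: ℓ^{(2n)}_{κ,u} is degenerate iff all κ_i have the same parity; in this
case the shifted curve is ℓ^{(n)}_{0,u'}, and ℓ^{(n)}_{κ,u} = ℓ^{(2n)}_{2κ,u} is always
degenerate. -/
theorem stmt_3 {d : ℕ} (hd : 0 < d) (n : Fin d → ℕ) (hn : ∀ j, 0 < n j)
    (hcop : ∀ i j, i ≠ j → Nat.Coprime (n i) (n j))
    (κ : Fin d → ℤ) (u : Fin d → ℝ) (hu : ∀ j, u j = 1 ∨ u j = -1) :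
    (LDeg2 n κ u ↔ ∀ i j, κ i ≡ κ j [ZMOD 2]) ∧
    ((∀ i j, κ i ≡ κ j [ZMOD 2]) →
      ∃ t' : ℝ, ∃ u' : Fin d → ℝ, (∀ j, u' j = 1 ∨ u' j = -1) ∧
        (∀ t : ℝ, lc2 n κ u (t - t') = lc1 n 0 u' t) ∧
        (∀ t : ℝ, lc1 n 0 u' t = fun j => u' j * Real.cos ((Pc n j : ℝ) * t))) ∧
    ((∀ t : ℝ, lc1 n κ u t = lc2 n (fun i => 2 * κ i) u t) ∧
      LDeg2 n (fun i => 2 * κ i) u) := by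
  have hlc1 : ∀ (u' : Fin d → ℝ) (t : ℝ),
      lc1 n 0 u' t = fun j => u' j * Real.cos ((Pc n j : ℝ) * t) := fun u' t => funext fun j => by
    simp [lc1]
  refine ⟨⟨parity_of_LDeg2 n hn κ u hu, exists_degenerate hd n hn hcop κ u hu⟩, fun hκ => ?_,
    fun t => funext fun j => ?_, exists_degenerate hd n hn hcop _ u hu fun i j => ?_⟩
  · obtain ⟨t', u', hu', h⟩ := exists_degenerate hd n hn hcop κ u hu hκ
    exact ⟨t', u', hu', fun t => (h t).trans (hlc1 u' t).symm, hlc1 u'⟩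
  · simp only [lc1, lc2]
    push_cast
    rw [mul_assoc, mul_div_mul_left _ _ (two_ne_zero' ℝ)]
  · exact Int.modEq_iff_dvd.mpr ⟨κ j - κ i, by ring⟩
end

section
/- Let n ∈ ℕ^d have pairwise relatively prime entries and u ∈ {−1,1}^d. For t ∈ [0,2π) let A^{(n)}(t) = {s ∈ [0,2π) : ℓ^{(n)}_{0,u}(s) = ℓ^{(n)}_{0,u}(t)}. Then: #A^{(n)}(t) = 1 if t ∈ {t^{(n)}_0, t^{(n)}_{p[n]}} = {0, π}; #A^{(n)}(t) = 2 if t ∈ [0,2π) but t is not of the form t^{(n)}_l for some l ∈ {0,…,2p[n]−1}; and #A^{(n)}(t) ≥ 2 if t = t^{(n)}_l for some l ∈ {1,…,2p[n]−1} with l ≠ p[n]. -/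
/-!
Since `u j = ±1`, two parameters `s`, `t` have the same image exactly when
`Pc n j * s ≡ ± Pc n j * t (mod 2π)` for every `j`, with a sign that may depend on `j`.
Pairwise coprimality gives a Bézout relation `∑ j, c j * Pc n j = 1`, so that the congruences
with one common sign collapse to `s ≡ ± t (mod 2π)` (`exists_two_pi_of_forall`). For
`t ∈ {0, π}` both signs say the same thing, whence the fiber is a point. If the signs at `i ≠ j`
disagree, multiplying the congruences by `n i`, `n j` and adding gives `p[n] t ∈ π ℤ`
(`same_sign_or_node`); so off the points `tn n l` the fiber is `{t, 2π - t}`. At those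
points other than `0`, `π` the fiber contains `t` and `2π - t`, and it is finite because
it consists of points `tn n m`.
-/

open Real Set

lemma lc1_eq_iff {d : ℕ} (n : Fin d → ℕ) (u : Fin d → ℝ) (hu : ∀ j, u j = 1 ∨ u j = -1)
    (s t : ℝ) : lc1 n 0 u s = lc1 n 0 u t ↔
      ∀ j, Real.cos ((Pc n j : ℝ) * s) = Real.cos ((Pc n j : ℝ) * t) := by
  have hu0 : ∀ j, u j ≠ 0 := fun j => by rcases hu j with h | h <;> rw [h] <;> norm_num
  simp [funext_iff, lc1, hu0]

lemma Pc_mul {d : ℕ} (n : Fin d → ℕ) (j : Fin d) : (Pc n j : ℝ) * n j = Pp n := by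
  have h : Pc n j * n j = Pp n := Finset.prod_erase_mul _ _ (Finset.mem_univ j)
  exact_mod_cast h

/-- Bézout relation for the cofactors of a pairwise coprime family. -/
lemma bezout_Pc {d : ℕ} (hd : 0 < d) (n : Fin d → ℕ)
    (hcop : ∀ i j, i ≠ j → Nat.Coprime (n i) (n j)) :
    ∃ c : Fin d → ℤ, ∑ j, (c j : ℝ) * (Pc n j : ℝ) = 1 := by
  have : Nonempty (Fin d) := ⟨⟨0, hd⟩⟩
  obtain ⟨c, hc⟩ := (exists_sum_eq_one_iff_pairwise_coprime' (s := fun j => (n j : ℤ))).2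
    (fun i j hij => Nat.isCoprime_iff_coprime.2 (hcop i j hij))
  refine ⟨c, ?_⟩
  have h : ∑ j, c j * (Pc n j : ℤ) = 1 := by
    rw [← hc]
    refine Finset.sum_congr rfl fun j _ => ?_
    rw [Finset.compl_singleton, Pc, Nat.cast_prod]
  exact_mod_cast h

/-- A real number all of whose multiples by the cofactors `Pc n j` lie in `2πℤ` lies in
`2πℤ` itself. -/
lemma exists_two_pi_of_forall {d : ℕ} (hd : 0 < d) (n : Fin d → ℕ)
    (hcop : ∀ i j, i ≠ j → Nat.Coprime (n i) (n j)) (x : ℝ)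
    (h : ∀ j, ∃ k : ℤ, (Pc n j : ℝ) * x = 2 * k * Real.pi) :
    ∃ k : ℤ, x = 2 * k * Real.pi := by
  obtain ⟨c, hc⟩ := bezout_Pc hd n hcop
  choose k hk using h
  refine ⟨∑ j, c j * k j, ?_⟩
  calc x = (∑ j, (c j : ℝ) * (Pc n j : ℝ)) * x := by rw [hc, one_mul]
    _ = ∑ j, 2 * ((c j : ℝ) * (k j : ℝ)) * Real.pi := by
      rw [Finset.sum_mul]
      refine Finset.sum_congr rfl fun j _ => ?_
      rw [mul_assoc, hk j]; ring
    _ = _ := by push_cast; rw [Finset.mul_sum, Finset.sum_mul]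

/-- For parameters with the same image, either one sign works for all coordinates, or `t` is
one of the points `tn n l`. -/
lemma same_sign_or_node {d : ℕ} (hd : 0 < d) (n : Fin d → ℕ) (hn : ∀ j, 0 < n j)
    (hcop : ∀ i j, i ≠ j → Nat.Coprime (n i) (n j)) (s t : ℝ)
    (h : ∀ j, Real.cos ((Pc n j : ℝ) * s) = Real.cos ((Pc n j : ℝ) * t)) :
    (∃ k : ℤ, t - s = 2 * k * Real.pi) ∨ (∃ k : ℤ, t + s = 2 * k * Real.pi) ∨
      ∃ l : ℤ, t = tn n l := by
  have hp : (Pp n : ℝ) ≠ 0 := by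
    exact_mod_cast (Finset.prod_pos fun j _ => hn j).ne'
  by_cases h1 : ∀ j, ∃ k : ℤ, (Pc n j : ℝ) * (t - s) = 2 * k * Real.pi
  · exact Or.inl (exists_two_pi_of_forall hd n hcop _ h1)
  by_cases h2 : ∀ j, ∃ k : ℤ, (Pc n j : ℝ) * (t + s) = 2 * k * Real.pi
  · exact Or.inr (Or.inl (exists_two_pi_of_forall hd n hcop _ h2))
  right; right
  obtain ⟨i, hi⟩ := not_forall.1 h1
  obtain ⟨j, hj⟩ := not_forall.1 h2
  obtain ⟨a, ha⟩ := Real.cos_eq_cos_iff.1 (h i)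
  obtain ⟨b, hb⟩ := Real.cos_eq_cos_iff.1 (h j)
  have ha := ha.resolve_left fun e => hi ⟨a, by linarith⟩
  have hb := hb.resolve_right fun e => hj ⟨b, by linarith⟩
  refine ⟨a * n i + b * n j, ?_⟩
  rw [tn, eq_div_iff hp]
  push_cast
  have e1 : (Pp n : ℝ) * (t + s) = 2 * a * Real.pi * n i := by
    rw [← Pc_mul n i]; linear_combination (n i : ℝ) * ha
  have e2 : (Pp n : ℝ) * (t - s) = 2 * b * Real.pi * n j := by
    rw [← Pc_mul n j]; linear_combination (n j : ℝ) * hb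
  linear_combination (e1 + e2) / 2

/-- The reflection of `t` at `π` has the same image as `t`. -/
lemma cos_reflect {d : ℕ} (n : Fin d → ℕ) (t : ℝ) (j : Fin d) :
    Real.cos ((Pc n j : ℝ) * (2 * Real.pi - t)) = Real.cos ((Pc n j : ℝ) * t) :=
  Real.cos_eq_cos_iff.2 ⟨Pc n j, Or.inr (by push_cast; ring)⟩

/-- Two points of `[0, 2π)` that are congruent modulo `2π` coincide. -/
lemma eq_of_sub_two_pi {s t : ℝ} (hs : s ∈ Set.Ico (0 : ℝ) (2 * Real.pi))
    (ht : t ∈ Set.Ico (0 : ℝ) (2 * Real.pi)) {k : ℤ} (h : t - s = 2 * k * Real.pi) :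
    s = t := by
  obtain ⟨hs0, hs1⟩ := hs
  obtain ⟨ht0, ht1⟩ := ht
  have hpi := Real.pi_pos
  have h1 : (k : ℝ) < 1 := by nlinarith
  have h2 : (-1 : ℝ) < k := by nlinarith
  have h1' : k < 1 := by exact_mod_cast h1
  have h2' : -1 < k := by exact_mod_cast h2
  have hk : k = 0 := by omega
  subst hk
  simp at h
  linarith

/-- At a multiple of `π` in `[0, 2π)` the fiber is a single point. -/
lemma fiber_pi_mul {d : ℕ} (hd : 0 < d) (n : Fin d → ℕ)
    (hcop : ∀ i j, i ≠ j → Nat.Coprime (n i) (n j)) (m : ℤ) {s t : ℝ}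
    (hs : s ∈ Set.Ico (0 : ℝ) (2 * Real.pi)) (ht : t ∈ Set.Ico (0 : ℝ) (2 * Real.pi))
    (htm : t = m * Real.pi)
    (h : ∀ j, Real.cos ((Pc n j : ℝ) * s) = Real.cos ((Pc n j : ℝ) * t)) : s = t := by
  obtain ⟨k, hk⟩ := exists_two_pi_of_forall hd n hcop (t - s) fun j => by
    obtain ⟨a, ha | ha⟩ := Real.cos_eq_cos_iff.1 (h j)
    · exact ⟨a, by linarith⟩
    · -- `t ≡ -t (mod 2π)`, so the opposite sign can be switched.
      refine ⟨Pc n j * m - a, ?_⟩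
      push_cast
      linear_combination 2 * (Pc n j : ℝ) * htm - ha
  exact eq_of_sub_two_pi hs ht hk

/-- Points of `[0, 2π)` of the form `tn n l` have `0 ≤ l < 2 p[n]`. -/
lemma tn_index {d : ℕ} (n : Fin d → ℕ) (hn : ∀ j, 0 < n j) (l : ℤ)
    (h : tn n l ∈ Set.Ico (0 : ℝ) (2 * Real.pi)) :
    ∃ m : ℕ, m < 2 * Pp n ∧ tn n l = tn n m := by
  have hp : (0 : ℝ) < Pp n := by exact_mod_cast (Finset.prod_pos fun j _ => hn j)
  have hpi := Real.pi_pos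
  obtain ⟨h0, h1⟩ := h
  rw [tn] at h0 h1
  rw [le_div_iff₀ hp] at h0
  rw [div_lt_iff₀ hp] at h1
  have h0' : (0 : ℝ) ≤ l := by
    by_contra! hl
    nlinarith
  have h1' : (l : ℝ) < 2 * Pp n := by
    by_contra! hl
    nlinarith
  have h0'' : 0 ≤ l := by exact_mod_cast h0'
  have h1'' : l < 2 * Pp n := by exact_mod_cast h1'
  lift l to ℕ using h0''
  exact ⟨l, by omega, rfl⟩

/-- A parameter with the same image as some `tn n l` is itself of this form. -/
lemma node_of_node {d : ℕ} (hd : 0 < d) (n : Fin d → ℕ) (hn : ∀ j, 0 < n j) (l : ℤ) (s : ℝ)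
    (h : ∀ j, Real.cos ((Pc n j : ℝ) * s) = Real.cos ((Pc n j : ℝ) * tn n l)) :
    ∃ m : ℤ, s = tn n m := by
  have hp : (Pp n : ℝ) ≠ 0 := by
    exact_mod_cast (Finset.prod_pos fun j _ => hn j).ne'
  have hl : tn n l * Pp n = l * Real.pi := by rw [tn]; field_simp
  let j : Fin d := ⟨0, hd⟩
  have hj := Pc_mul n j
  obtain ⟨a, ha | ha⟩ := Real.cos_eq_cos_iff.1 (h j)
  · refine ⟨l - 2 * a * n j, ?_⟩
    rw [tn, eq_div_iff hp]
    push_cast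
    linear_combination hl - (n j : ℝ) * ha - (s - tn n l) * hj
  · refine ⟨2 * a * n j - l, ?_⟩
    rw [tn, eq_div_iff hp]
    push_cast
    linear_combination -hl + (n j : ℝ) * ha - (s + tn n l) * hj

/-- Theorem 1.4 a): cardinalities of the fibers A^{(n)}(t) of a degenerate Lissajous
curve ℓ^{(n)}_{0,u} on [0,2π). -/
theorem stmt_4 {d : ℕ} (hd : 0 < d) (n : Fin d → ℕ) (hn : ∀ j, 0 < n j)
    (hcop : ∀ i j, i ≠ j → Nat.Coprime (n i) (n j))
    (u : Fin d → ℝ) (hu : ∀ j, u j = 1 ∨ u j = -1)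
    (A : ℝ → Set ℝ)
    (hA : ∀ t, A t = {s ∈ Set.Ico (0 : ℝ) (2 * Real.pi) | lc1 n 0 u s = lc1 n 0 u t}) :
    ((A (tn n 0)).ncard = 1 ∧ (A (tn n (Pp n))).ncard = 1 ∧
      tn n 0 = 0 ∧ tn n (Pp n) = Real.pi) ∧
    (∀ t ∈ Set.Ico (0 : ℝ) (2 * Real.pi),
      (∀ l : ℕ, l < 2 * Pp n → t ≠ tn n l) → (A t).ncard = 2) ∧
    (∀ l : ℕ, 1 ≤ l → l < 2 * Pp n → l ≠ Pp n → 2 ≤ (A (tn n l)).ncard) := by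
  have hp : (0 : ℝ) < Pp n := by exact_mod_cast (Finset.prod_pos fun j _ => hn j)
  have hpi := Real.pi_pos
  have mem : ∀ s t, s ∈ A t ↔ s ∈ Set.Ico (0 : ℝ) (2 * Real.pi) ∧
      ∀ j, Real.cos ((Pc n j : ℝ) * s) = Real.cos ((Pc n j : ℝ) * t) := fun s t => by
    rw [hA, Set.mem_ofPred_eq, lc1_eq_iff n u hu]
  have t0 : tn n 0 = 0 := by simp [tn]
  have tp : tn n (Pp n) = Real.pi := by
    rw [tn, Int.cast_natCast]; field_simp
  have single : ∀ (m : ℤ) (t : ℝ), t ∈ Set.Ico (0 : ℝ) (2 * Real.pi) → t = m * Real.pi →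
      (A t).ncard = 1 := fun m t ht htm => by
    rw [Set.ncard_eq_one]
    refine ⟨t, Set.ext fun s => ⟨fun hs => ?_, ?_⟩⟩
    · obtain ⟨hs, h⟩ := (mem s t).1 hs
      exact fiber_pi_mul hd n hcop m hs ht htm h
    · rintro rfl
      exact (mem s s).2 ⟨ht, fun _ => rfl⟩
  refine ⟨⟨?_, ?_, t0, tp⟩, ?_, ?_⟩
  · rw [t0]
    exact single 0 0 ⟨le_rfl, by linarith⟩ (by simp)
  · rw [tp]
    exact single 1 Real.pi ⟨hpi.le, by linarith⟩ (by simp)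
  · intro t ht hl
    have hnode : ∀ l : ℤ, t ≠ tn n l := fun l e => by
      obtain ⟨m, hm, hm'⟩ := tn_index n hn l (e ▸ ht)
      exact hl m hm (e.trans hm')
    have ht0 : 0 < t := lt_of_le_of_ne ht.1 fun e => hnode 0 (by rw [t0, e])
    have hr : 2 * Real.pi - t ∈ Set.Ico (0 : ℝ) (2 * Real.pi) :=
      ⟨by linarith [ht.2], by linarith⟩
    rw [Set.ncard_eq_two]
    refine ⟨t, 2 * Real.pi - t, fun e => hnode (Pp n) (by rw [tp]; linarith), ?_⟩
    ext s
    rw [mem, Set.mem_insert_iff, Set.mem_singleton_iff]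
    constructor
    · rintro ⟨hs, h⟩
      rcases same_sign_or_node hd n hn hcop s t h with ⟨k, hk⟩ | ⟨k, hk⟩ | ⟨l, e⟩
      · exact Or.inl (eq_of_sub_two_pi hs ht hk)
      · refine Or.inr (eq_of_sub_two_pi (k := 1 - k) hs hr ?_)
        push_cast
        linarith
      · exact absurd e (hnode l)
    · rintro (rfl | rfl)
      · exact ⟨ht, fun _ => rfl⟩
      · exact ⟨hr, cos_reflect n t⟩
  · intro l h1 h2 hlp
    have h1' : (1 : ℝ) ≤ l := by exact_mod_cast h1
    have h2' : (l : ℝ) < 2 * Pp n := by exact_mod_cast h2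
    have ht0 : 0 < tn n l := by
      rw [tn, Int.cast_natCast]; positivity
    have ht1 : tn n l < 2 * Real.pi := by
      rw [tn, Int.cast_natCast, div_lt_iff₀ hp]; nlinarith
    have hne : tn n l ≠ 2 * Real.pi - tn n l := fun e => by
      have e' : tn n l = Real.pi := by linarith
      rw [tn, Int.cast_natCast, div_eq_iff hp.ne', mul_comm] at e'
      have := mul_left_cancel₀ hpi.ne' e'
      exact hlp (by exact_mod_cast this)
    have hfin : (A (tn n l)).Finite := by
      refine ((Set.finite_Iio (2 * Pp n)).image fun m : ℕ => tn n m).subset fun s hs => ?_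
      obtain ⟨hs, h⟩ := (mem _ _).1 hs
      obtain ⟨m, rfl⟩ := node_of_node hd n hn l s h
      obtain ⟨k, hk, e⟩ := tn_index n hn m hs
      exact ⟨k, hk, e.symm⟩
    rw [← Set.ncard_pair hne]
    refine Set.ncard_le_ncard ?_ hfin
    rintro s (rfl | rfl)
    · exact (mem _ _).2 ⟨⟨ht0.le, ht1⟩, fun _ => rfl⟩
    · exact (mem _ _).2 ⟨⟨by linarith, by linarith⟩, cos_reflect n _⟩
end

section
/- Let n ∈ ℕ^d have pairwise relatively prime entries, u ∈ {−1,1}^d and M ⊆ {1,…,d}. For t ∈ [0,2π) let A^{(n)}(t) = {s ∈ [0,2π) : ℓ^{(n)}_{0,u}(s) = ℓ^{(n)}_{0,u}(t)}. For l ∈ {0,…,2p[n]−1} the following are equivalent: (i) l ≢ 0 (mod n_i) for all i ∈ M and l ≡ 0 (mod n_i) for all i ∉ M; (ii) ℓ^{(n)}_{0,u}(t^{(n)}_l) ∈ F^d_M. If (i) or (ii) holds, then #A^{(n)}(t^{(n)}_l) = 2^{#M}. Furthermore, #LD^{(n)}_u = (1/2^{d−1})·∏_{i=1}^d (n_i+1)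 and #(LD^{(n)}_u ∩ F^d_M) = (1/2^{#M−1})·∏_{i∈M}(n_i−1), where an empty product equals 1. -/
/-!
Write `P = Pp n`. The `i`-th coordinate of the curve at `tn n l` is `u i * cos (l π / n i)`. It
equals `±1` exactly when `n i ∣ l`, which gives the equivalence of the two conditions
(`pt_mem_Fface`), and two node indices `k`, `l` give the same point exactly when
`k ≡ ± l (mod 2 n i)` for all `i` (`pt_eq_pt_iff`).

A parameter `s` with the same image as `tn n l` satisfies `P s ∈ π ℤ`, so it is itself of the form
`tn n k`. Hence the fibre is counted by the residues `k` mod `2 P` with `k ≡ ± l (mod 2 n i)` for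
all `i`. Writing `k = l + 2 x`, this becomes `x ≡ 0` or `x ≡ -l (mod n i)`, and the Chinese
remainder theorem gives a product of the numbers `2` (if `n i ∤ l`) and `1` (if `n i ∣ l`), that is
`2 ^ #M` (`card_sameNode`).

By the symmetry `k ↦ 2 P - k` the node set is the image of all of `{0, …, 2 P - 1}`, so
double counting shows that `2 ^ #M` times the number of nodes on the face `M` is the number of
`k < 2 P` with `n i ∤ k` for `i ∈ M` and `n i ∣ k` for `i ∉ M`; by the Chinese remainder theorem
this is `2 * ∏ i ∈ M, (n i - 1)`. Summing over all `M` and expanding `∏ i, ((n i - 1) + 2)` gives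
the cardinality of the whole node set.
-/


open Real Set

/-- The node set LD^{(n)}_u = {ℓ^{(n)}_{0,u}(t^{(n)}_l) : 0 ≤ l ≤ p[n]}. -/
noncomputable def LD {d : ℕ} (n : Fin d → ℕ) (u : Fin d → ℝ) : Set (Fin d → ℝ) :=
  {x | ∃ l : ℕ, l ≤ Pp n ∧ x = lc1 n 0 u (tn n l)}

/-- The face set F^d_M of the cube [−1,1]^d. -/
def Fface (d : ℕ) (M : Finset (Fin d)) : Set (Fin d → ℝ) :=
  {x | (∀ i ∈ M, -1 < x i ∧ x i < 1) ∧ (∀ i ∉ M, x i = -1 ∨ x i = 1)}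

lemma dvd_Pp {d : ℕ} (n : Fin d → ℕ) (i : Fin d) : n i ∣ Pp n :=
  Finset.dvd_prod_of_mem n (Finset.mem_univ i)

lemma Pp_eq {d : ℕ} (n : Fin d → ℕ) (i : Fin d) : Pp n = n i * Pc n i :=
  (Finset.mul_prod_erase Finset.univ n (Finset.mem_univ i)).symm

lemma lc1_tn_apply {d : ℕ} {n : Fin d → ℕ} (hn : ∀ j, 0 < n j) (u : Fin d → ℝ) (l : ℤ)
    (i : Fin d) : lc1 n 0 u (tn n l) i = u i * Real.cos (l * Real.pi / n i) := by
  have hP := Pp_pos hn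
  rw [Pp_eq n i] at hP
  have h2 : (Pc n i : ℝ) ≠ 0 := by
    exact_mod_cast (Nat.pos_of_mul_pos_left hP).ne'
  have h1 : (n i : ℝ) ≠ 0 := by exact_mod_cast (hn i).ne'
  simp only [lc1, tn, Pp_eq n i, Pi.zero_apply]
  congr 2
  push_cast
  field_simp
  ring

lemma cos_eq_cos_iff_dvd {m : ℕ} (hm : 0 < m) (k l : ℤ) :
    Real.cos (k * Real.pi / m) = Real.cos (l * Real.pi / m) ↔
      (2 * (m : ℤ) ∣ k - l ∨ 2 * (m : ℤ) ∣ k + l) := by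
  have hm' : (m : ℝ) ≠ 0 := by exact_mod_cast hm.ne'
  have hpi := Real.pi_ne_zero
  rw [Real.cos_eq_cos_iff]
  constructor
  · rintro ⟨c, h | h⟩
    · left
      refine ⟨-c, ?_⟩
      field_simp at h
      have : (l : ℝ) = c * 2 * m + k := by linarith
      have : l = c * 2 * m + k := by exact_mod_cast this
      rw [this]; ring
    · right
      refine ⟨c, ?_⟩
      field_simp at h
      have : (l : ℝ) = c * 2 * m - k := by linarith
      have : l = c * 2 * m - k := by exact_mod_cast this
      rw [this]; ring
  · rintro (⟨c, h⟩ | ⟨c, h⟩)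
    · refine ⟨-c, Or.inl ?_⟩
      have : (k : ℝ) = l + 2 * m * c := by
        have : k = l + 2 * m * c := by linarith
        exact_mod_cast this
      rw [this]; push_cast; field_simp; ring
    · refine ⟨c, Or.inr ?_⟩
      have : (k : ℝ) = - l + 2 * m * c := by
        have : k = - l + 2 * m * c := by linarith
        exact_mod_cast this
      rw [this]; field_simp; ring

lemma sin_eq_zero_iff_dvd {m : ℕ} (hm : 0 < m) (l : ℤ) :
    Real.sin (l * Real.pi / m) = 0 ↔ (m : ℤ) ∣ l := by
  have hm' : (m : ℝ) ≠ 0 := by exact_mod_cast hm.ne'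
  have hpi := Real.pi_ne_zero
  rw [Real.sin_eq_zero_iff]
  constructor
  · rintro ⟨c, h⟩
    refine ⟨c, ?_⟩
    field_simp at h
    have : (l : ℝ) = m * c := by linarith
    exact_mod_cast this
  · rintro ⟨c, rfl⟩
    refine ⟨c, ?_⟩
    push_cast
    field_simp

lemma unit_sq {x : ℝ} (hx : x = 1 ∨ x = -1) : x ^ 2 = 1 := by
  rcases hx with rfl | rfl <;> norm_num

lemma coord_sq {d : ℕ} {n : Fin d → ℕ} (hn : ∀ j, 0 < n j) {u : Fin d → ℝ}
    (hu : ∀ j, u j = 1 ∨ u j = -1) (l : ℤ) (i : Fin d) :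
    lc1 n 0 u (tn n l) i ^ 2 = 1 - Real.sin (l * Real.pi / n i) ^ 2 := by
  rw [lc1_tn_apply hn, mul_pow, unit_sq (hu i), Real.cos_sq']
  ring

lemma coord_extreme_iff {d : ℕ} {n : Fin d → ℕ} (hn : ∀ j, 0 < n j) {u : Fin d → ℝ}
    (hu : ∀ j, u j = 1 ∨ u j = -1) (l : ℤ) (i : Fin d) :
    (lc1 n 0 u (tn n l) i = -1 ∨ lc1 n 0 u (tn n l) i = 1) ↔ (n i : ℤ) ∣ l := by
  rw [← sin_eq_zero_iff_dvd (hn i), or_comm, ← sq_eq_one_iff, coord_sq hn hu]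
  simp

lemma coord_interior_iff {d : ℕ} {n : Fin d → ℕ} (hn : ∀ j, 0 < n j) {u : Fin d → ℝ}
    (hu : ∀ j, u j = 1 ∨ u j = -1) (l : ℤ) (i : Fin d) :
    (-1 < lc1 n 0 u (tn n l) i ∧ lc1 n 0 u (tn n l) i < 1) ↔ ¬ (n i : ℤ) ∣ l := by
  rw [← sin_eq_zero_iff_dvd (hn i), ← abs_lt, ← sq_lt_one_iff_abs_lt_one, coord_sq hn hu,
    sub_lt_self_iff, sq_pos_iff]

lemma pt_mem_Fface {d : ℕ} {n : Fin d → ℕ} (hn : ∀ j, 0 < n j) {u : Fin d → ℝ}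
    (hu : ∀ j, u j = 1 ∨ u j = -1) (M : Finset (Fin d)) (l : ℕ) :
    lc1 n 0 u (tn n l) ∈ Fface d M ↔ (∀ i ∈ M, ¬ (n i ∣ l)) ∧ ∀ i ∉ M, n i ∣ l := by
  simp only [Fface, Set.mem_ofPred_eq, coord_interior_iff hn hu, coord_extreme_iff hn hu,
    Int.natCast_dvd_natCast]

lemma pt_eq_pt_iff {d : ℕ} {n : Fin d → ℕ} (hn : ∀ j, 0 < n j) {u : Fin d → ℝ}
    (hu : ∀ j, u j = 1 ∨ u j = -1) (k l : ℤ) :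
    lc1 n 0 u (tn n k) = lc1 n 0 u (tn n l) ↔
      ∀ i, 2 * (n i : ℤ) ∣ k - l ∨ 2 * (n i : ℤ) ∣ k + l := by
  have hu0 : ∀ i, u i ≠ 0 := fun i => by rcases hu i with h | h <;> rw [h] <;> norm_num
  simp only [funext_iff, lc1_tn_apply hn, mul_right_inj' (hu0 _), cos_eq_cos_iff_dvd (hn _)]

/-! ### Counting residues -/

/-- Chinese remainder theorem as a counting statement: prescribing a set of allowed residues
modulo each `n i` leaves the product of their sizes many residues modulo `Pp n`. -/
lemma crt_count {d : ℕ} {n : Fin d → ℕ} (hn : ∀ j, 0 < n j)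
    (hcop : ∀ i j, i ≠ j → Nat.Coprime (n i) (n j)) (S : ∀ i, Finset (ZMod (n i))) :
    ((Finset.range (Pp n)).filter fun x : ℕ => ∀ i, (x : ZMod (n i)) ∈ S i).card =
      ∏ i, (S i).card := by
  have : NeZero (Pp n) := ⟨(Pp_pos hn).ne'⟩
  let e : ZMod (Pp n) ≃+* Π i, ZMod (n i) := ZMod.prodEquivPi n fun i j h => hcop i j h
  have he : ∀ (x : ℕ) (i : Fin d), e (x : ZMod (Pp n)) i = x := fun x i => by
    rw [map_natCast]; rfl
  rw [← Fintype.card_piFinset]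
  refine Finset.card_bij (fun x _ => e (x : ZMod (Pp n))) ?_ ?_ ?_
  · intro x hx
    rw [Fintype.mem_piFinset]
    intro i
    rw [he]
    exact (Finset.mem_filter.1 hx).2 i
  · intro x hx y hy hxy
    have h := e.injective hxy
    rw [ZMod.natCast_eq_natCast_iff'] at h
    simp only [Finset.mem_filter, Finset.mem_range] at hx hy
    rwa [Nat.mod_eq_of_lt hx.1, Nat.mod_eq_of_lt hy.1] at h
  · intro y hy
    have hval : e (((e.symm y).val : ℕ) : ZMod (Pp n)) = y := by
      rw [ZMod.natCast_zmod_val, e.apply_symm_apply]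
    refine ⟨(e.symm y).val, ?_, hval⟩
    simp only [Finset.mem_filter, Finset.mem_range]
    refine ⟨ZMod.val_lt _, fun i => ?_⟩
    rw [← he, hval]
    exact Fintype.mem_piFinset.1 hy i

/-- The indices `k < 2 p[n]` for which `tn n k` has the same image under the curve as `tn n l`,
described by congruences. -/
def sameNode {d : ℕ} (n : Fin d → ℕ) (l : ℕ) : Finset ℕ :=
  (Finset.range (2 * Pp n)).filter fun k : ℕ =>
    ∀ i, 2 * (n i : ℤ) ∣ (k : ℤ) - l ∨ 2 * (n i : ℤ) ∣ (k : ℤ) + l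

/-- The indices `k < 2 p[n]` satisfying the divisibility conditions of the face `M`. -/
def faceIdx {d : ℕ} (n : Fin d → ℕ) (M : Finset (Fin d)) : Finset ℕ :=
  (Finset.range (2 * Pp n)).filter fun k : ℕ => (∀ i ∈ M, ¬ (n i ∣ k)) ∧ ∀ i ∉ M, n i ∣ k

lemma card_sameNode {d : ℕ} (hd : 0 < d) {n : Fin d → ℕ} (hn : ∀ j, 0 < n j)
    (hcop : ∀ i j, i ≠ j → Nat.Coprime (n i) (n j)) (M : Finset (Fin d)) (l : ℕ)
    (hl : (∀ i ∈ M, ¬ (n i ∣ l)) ∧ ∀ i ∉ M, n i ∣ l) :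
    (sameNode n l).card = 2 ^ M.card := by
  have hP := Pp_pos hn
  have hS : ∀ i, ({0, -(l : ZMod (n i))} : Finset (ZMod (n i))).card = if i ∈ M then 2 else 1 := by
    intro i
    split_ifs with hi
    · refine Finset.card_pair fun h => hl.1 i hi ?_
      rwa [eq_comm, neg_eq_zero, ZMod.natCast_eq_zero_iff] at h
    · rw [(ZMod.natCast_eq_zero_iff l (n i)).2 (hl.2 i hi)]
      simp
  have hcard := crt_count hn hcop fun i => ({0, -(l : ZMod (n i))} : Finset (ZMod (n i)))
  simp only [hS] at hcard
  rw [Finset.prod_ite_mem, Finset.univ_inter, Finset.prod_const] at hcard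
  rw [← hcard]
  symm
  -- For `k = l + 2 x` the congruences `k ≡ l`, `k ≡ -l` mod `2 n i` read `x ≡ 0`, `x ≡ -l` mod `n i`.
  have key : ∀ (x : ℕ) (k : ℤ), (2 * Pp n : ℤ) ∣ k - (l + 2 * x) → ∀ i,
      ((x : ZMod (n i)) ∈ ({0, -(l : ZMod (n i))} : Finset (ZMod (n i))) ↔
        (2 * (n i : ℤ) ∣ k - l ∨ 2 * (n i : ℤ) ∣ k + l)) := by
    intro x k hk i
    have hk' : (2 * n i : ℤ) ∣ k - (l + 2 * x) :=
      (mul_dvd_mul_left 2 (Int.natCast_dvd_natCast.2 (dvd_Pp n i))).trans hk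
    rw [Finset.mem_insert, Finset.mem_singleton, eq_neg_iff_add_eq_zero]
    have h1 : k - l = k - (l + 2 * x) + 2 * (x : ℤ) := by ring
    have h2 : k + l = k - (l + 2 * x) + 2 * ((x + l : ℕ) : ℤ) := by push_cast; ring
    rw [h1, h2, dvd_add_right hk', dvd_add_right hk', mul_dvd_mul_iff_left two_ne_zero,
      mul_dvd_mul_iff_left two_ne_zero, ← Nat.cast_add, ZMod.natCast_eq_zero_iff,
      ZMod.natCast_eq_zero_iff, Int.natCast_dvd_natCast, Int.natCast_dvd_natCast]
  have hmod : ∀ x : ℕ, (2 * Pp n : ℤ) ∣ (((l + 2 * x) % (2 * Pp n) : ℕ) : ℤ) - (l + 2 * x) := by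
    intro x
    have := Nat.mod_modEq (l + 2 * x) (2 * Pp n)
    have := (Nat.modEq_iff_dvd.1 this.symm)
    push_cast at this ⊢
    exact this
  refine Finset.card_bij (fun x _ => (l + 2 * x) % (2 * Pp n)) ?_ ?_ ?_
  · intro x hx
    simp only [sameNode, Finset.mem_filter, Finset.mem_range] at hx ⊢
    exact ⟨Nat.mod_lt _ (by omega), fun i => (key x _ (hmod x) i).1 (hx.2 i)⟩
  · intro x hx y hy hxy
    simp only [Finset.mem_filter, Finset.mem_range] at hx hy
    have h : l + 2 * x ≡ l + 2 * y [MOD 2 * Pp n] := hxy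
    have h := Nat.ModEq.mul_left_cancel' two_ne_zero (Nat.ModEq.add_left_cancel' l h)
    exact Nat.ModEq.eq_of_lt_of_lt h hx.1 hy.1
  · intro k hk
    simp only [sameNode, Finset.mem_filter, Finset.mem_range] at hk
    obtain ⟨hk1, hk2⟩ := hk
    -- `k` and `l` have the same parity because there is at least one coordinate.
    have hpar : (2 : ℤ) ∣ (k : ℤ) - l := by
      rcases hk2 ⟨0, hd⟩ with h | h
      · exact (Dvd.intro _ rfl).trans h
      · have := (Dvd.intro _ rfl : (2 : ℤ) ∣ 2 * (n ⟨0, hd⟩ : ℤ)).trans h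
        omega
    obtain ⟨c, hc⟩ := hpar
    have hP' : (Pp n : ℤ) ≠ 0 := by exact_mod_cast hP.ne'
    obtain ⟨x, hx⟩ := Int.eq_ofNat_of_zero_le (Int.emod_nonneg c hP')
    have hxlt : x < Pp n := by
      have := Int.emod_lt_of_pos c (by exact_mod_cast hP : (0 : ℤ) < Pp n)
      rw [hx] at this
      exact_mod_cast this
    have hxk : (2 * Pp n : ℤ) ∣ (k : ℤ) - (l + 2 * x) := by
      have : (k : ℤ) - (l + 2 * x) = 2 * (c - c % Pp n) := by rw [hx]; linarith
      rw [this]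
      exact mul_dvd_mul_left 2 (Int.dvd_self_sub_emod)
    refine ⟨x, ?_, ?_⟩
    · simp only [Finset.mem_filter, Finset.mem_range]
      exact ⟨hxlt, fun i => (key x k hxk i).2 (hk2 i)⟩
    · have : l + 2 * x ≡ k [MOD 2 * Pp n] := by
        rw [Nat.modEq_iff_dvd]; push_cast; exact hxk
      exact Eq.trans this (Nat.mod_eq_of_lt hk1)

lemma card_faceIdx {d : ℕ} {n : Fin d → ℕ} (hn : ∀ j, 0 < n j)
    (hcop : ∀ i j, i ≠ j → Nat.Coprime (n i) (n j)) (M : Finset (Fin d)) :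
    (faceIdx n M).card = 2 * ∏ i ∈ M, (n i - 1) := by
  have hne : ∀ i, NeZero (n i) := fun i => ⟨(hn i).ne'⟩
  let q : ℕ → Prop := fun k => (∀ i ∈ M, ¬ (n i ∣ k)) ∧ ∀ i ∉ M, n i ∣ k
  have hq : ∀ k, q (Pp n + k) ↔ q k := fun k => by
    simp only [q, Nat.dvd_add_right (dvd_Pp n _)]
  have hcard := crt_count hn hcop fun i => if i ∈ M then ({0}ᶜ : Finset (ZMod (n i))) else {0}
  have hmem : ∀ k : ℕ, (∀ i, (k : ZMod (n i)) ∈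
      if i ∈ M then ({0}ᶜ : Finset (ZMod (n i))) else {0}) ↔ q k := by
    intro k
    constructor
    · intro h
      refine ⟨fun i hi => ?_, fun i hi => ?_⟩ <;>
      · have := h i
        simpa [hi, ZMod.natCast_eq_zero_iff] using this
    · rintro ⟨h1, h2⟩ i
      by_cases hi : i ∈ M
      · simpa [hi, ZMod.natCast_eq_zero_iff] using h1 i hi
      · simpa [hi, ZMod.natCast_eq_zero_iff] using h2 i hi
  have hS : ∀ i, (if i ∈ M then ({0}ᶜ : Finset (ZMod (n i))) else {0}).card =
      if i ∈ M then n i - 1 else 1 := by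
    intro i
    split_ifs
    · rw [Finset.card_compl, ZMod.card, Finset.card_singleton]
    · simp
  simp only [hmem, hS] at hcard
  rw [Finset.prod_ite_mem, Finset.univ_inter] at hcard
  have hcount : Nat.count q (Pp n) = ∏ i ∈ M, (n i - 1) := by
    rw [Nat.count_eq_card_filter_range, hcard]
  change ((Finset.range (2 * Pp n)).filter q).card = _
  rw [← Nat.count_eq_card_filter_range, two_mul (Pp n), Nat.count_add]
  have hshift : Nat.count (fun k => q (Pp n + k)) (Pp n) = Nat.count q (Pp n) := by
    rw [Nat.count_eq_card_filter_range, Nat.count_eq_card_filter_range]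
    exact congrArg Finset.card (Finset.filter_congr fun k _ => hq k)
  rw [hshift, hcount, two_mul]

/-! ### Fibres of the curve over the nodes -/

lemma tn_mem_Ico {d : ℕ} {n : Fin d → ℕ} (hn : ∀ j, 0 < n j) (k : ℤ) :
    tn n k ∈ Set.Ico (0 : ℝ) (2 * Real.pi) ↔ 0 ≤ k ∧ k < 2 * Pp n := by
  have hP : (0 : ℝ) < Pp n := by exact_mod_cast Pp_pos hn
  rw [Set.mem_Ico, tn, le_div_iff₀ hP, zero_mul, div_lt_iff₀ hP,
    mul_nonneg_iff_of_pos_right Real.pi_pos, Int.cast_nonneg_iff,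
    show 2 * Real.pi * (Pp n : ℝ) = (2 * Pp n) * Real.pi by ring,
    mul_lt_mul_iff_left₀ Real.pi_pos]
  norm_cast

lemma tn_injective {d : ℕ} {n : Fin d → ℕ} (hn : ∀ j, 0 < n j) : Function.Injective (tn n) := by
  intro a b h
  have hP : (Pp n : ℝ) ≠ 0 := by exact_mod_cast (Pp_pos hn).ne'
  have := Real.pi_ne_zero
  simp only [tn] at h
  field_simp at h
  exact_mod_cast h

/-- Every parameter with the same image as a node parameter is itself a node parameter; a single
coordinate suffices to see this. -/
lemma exists_eq_tn {d : ℕ} (hd : 0 < d) {n : Fin d → ℕ} (hn : ∀ j, 0 < n j) {u : Fin d → ℝ}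
    (hu : ∀ j, u j = 1 ∨ u j = -1) (l : ℤ) (s : ℝ)
    (h : lc1 n 0 u s = lc1 n 0 u (tn n l)) : ∃ k : ℤ, s = tn n k := by
  let i : Fin d := ⟨0, hd⟩
  have hu0 : u i ≠ 0 := by rcases hu i with h | h <;> rw [h] <;> norm_num
  have hi := congrFun h i
  have hPc : (Pc n i : ℝ) ≠ 0 := by
    have hP := Pp_pos hn
    rw [Pp_eq n i] at hP
    exact_mod_cast (Nat.pos_of_mul_pos_left hP).ne'
  have hni : (n i : ℝ) ≠ 0 := by exact_mod_cast (hn i).ne'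
  rw [lc1_tn_apply hn] at hi
  simp only [lc1, mul_right_inj' hu0, Pi.zero_apply, Int.cast_zero, zero_mul, zero_div,
    sub_zero] at hi
  obtain ⟨c, h | h⟩ := Real.cos_eq_cos_iff.1 hi
  · refine ⟨l - 2 * c * n i, ?_⟩
    rw [tn, Pp_eq n i]
    push_cast
    field_simp at h ⊢
    linarith
  · refine ⟨2 * c * n i - l, ?_⟩
    rw [tn, Pp_eq n i]
    push_cast
    field_simp at h ⊢
    linarith

lemma fibre_eq {d : ℕ} (hd : 0 < d) {n : Fin d → ℕ} (hn : ∀ j, 0 < n j) {u : Fin d → ℝ}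
    (hu : ∀ j, u j = 1 ∨ u j = -1) (l : ℕ) :
    {s ∈ Set.Ico (0 : ℝ) (2 * Real.pi) | lc1 n 0 u s = lc1 n 0 u (tn n l)} =
      (fun k : ℕ => tn n k) '' (sameNode n l : Set ℕ) := by
  ext s
  simp only [Set.mem_image, sameNode, Finset.coe_filter, Finset.mem_range,
    Set.mem_ofPred_eq]
  constructor
  · rintro ⟨hs, h⟩
    obtain ⟨k, rfl⟩ := exists_eq_tn hd hn hu l s h
    obtain ⟨h0, hk⟩ := (tn_mem_Ico hn k).1 hs
    lift k to ℕ using h0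
    exact ⟨k, ⟨by exact_mod_cast hk, (pt_eq_pt_iff hn hu k l).1 h⟩, rfl⟩
  · rintro ⟨k, ⟨hk, h⟩, rfl⟩
    exact ⟨(tn_mem_Ico hn k).2 ⟨by positivity, by exact_mod_cast hk⟩,
      (pt_eq_pt_iff hn hu k l).2 h⟩

/-! ### Cardinalities of the node sets -/

/-- The symmetry `k ↦ 2 p[n] - k` shows that running over a full period gives no new nodes. -/
lemma mem_LD_iff {d : ℕ} {n : Fin d → ℕ} (hn : ∀ j, 0 < n j) {u : Fin d → ℝ}
    (hu : ∀ j, u j = 1 ∨ u j = -1) (x : Fin d → ℝ) :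
    x ∈ LD n u ↔ ∃ k < 2 * Pp n, lc1 n 0 u (tn n (k : ℕ)) = x := by
  have hP := Pp_pos hn
  constructor
  · rintro ⟨l, hl, rfl⟩
    exact ⟨l, by omega, rfl⟩
  · rintro ⟨k, hk, rfl⟩
    by_cases hkP : k ≤ Pp n
    · exact ⟨k, hkP, rfl⟩
    · refine ⟨2 * Pp n - k, by omega, (pt_eq_pt_iff hn hu _ _).2 fun i => Or.inr ?_⟩
      rw [Nat.cast_sub hk.le, add_sub_cancel]
      push_cast
      exact mul_dvd_mul_left 2 (Int.natCast_dvd_natCast.2 (dvd_Pp n i))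

lemma LD_inter_Fface {d : ℕ} {n : Fin d → ℕ} (hn : ∀ j, 0 < n j) {u : Fin d → ℝ}
    (hu : ∀ j, u j = 1 ∨ u j = -1) (M : Finset (Fin d)) :
    LD n u ∩ Fface d M = (fun k : ℕ => lc1 n 0 u (tn n k)) '' (faceIdx n M : Set ℕ) := by
  ext x
  simp only [Set.mem_inter_iff, mem_LD_iff hn hu, Set.mem_image, faceIdx, Finset.coe_filter,
    Finset.mem_range, Set.mem_ofPred_eq]
  constructor
  · rintro ⟨⟨k, hk, rfl⟩, h⟩
    exact ⟨k, ⟨hk, (pt_mem_Fface hn hu M k).1 h⟩, rfl⟩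
  · rintro ⟨k, ⟨hk, h⟩, rfl⟩
    exact ⟨⟨k, hk, rfl⟩, (pt_mem_Fface hn hu M k).2 h⟩

/-- Double counting: each node on the face `M` is attained by exactly `2 ^ #M` of the indices
in `faceIdx n M`. -/
lemma ncard_LD_inter_Fface {d : ℕ} (hd : 0 < d) {n : Fin d → ℕ} (hn : ∀ j, 0 < n j)
    (hcop : ∀ i j, i ≠ j → Nat.Coprime (n i) (n j)) {u : Fin d → ℝ}
    (hu : ∀ j, u j = 1 ∨ u j = -1) (M : Finset (Fin d)) :
    (LD n u ∩ Fface d M).ncard * 2 ^ M.card = 2 * ∏ i ∈ M, (n i - 1) := by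
  classical
  rw [LD_inter_Fface hn hu, ← Finset.coe_image, Set.ncard_coe_finset, ← card_faceIdx hn hcop,
    Finset.card_eq_sum_card_image (fun k : ℕ => lc1 n 0 u (tn n k)) (faceIdx n M)]
  symm
  rw [← smul_eq_mul, ← Finset.sum_const]
  refine Finset.sum_congr rfl fun b hb => ?_
  obtain ⟨l, hl, rfl⟩ := Finset.mem_image.1 hb
  have hl2 := (Finset.mem_filter.1 hl).2
  rw [← card_sameNode hd hn hcop M l hl2]
  congr 1
  ext k
  simp only [faceIdx, sameNode, Finset.mem_filter, ← pt_eq_pt_iff hn hu (u := u)]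
  constructor
  · rintro ⟨⟨h1, -⟩, h2⟩
    exact ⟨h1, h2⟩
  · rintro ⟨h1, h2⟩
    refine ⟨⟨h1, (pt_mem_Fface hn hu M k).1 ?_⟩, h2⟩
    rw [h2]
    exact (pt_mem_Fface hn hu M l).2 hl2

/-- The faces `Fface d M` partition the node set. -/
lemma ncard_LD_eq_sum {d : ℕ} {n : Fin d → ℕ} (hn : ∀ j, 0 < n j) {u : Fin d → ℝ}
    (hu : ∀ j, u j = 1 ∨ u j = -1) :
    (LD n u).ncard = ∑ M : Finset (Fin d), (LD n u ∩ Fface d M).ncard := by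
  classical
  let L : Finset (Fin d → ℝ) :=
    (Finset.range (2 * Pp n)).image fun k : ℕ => lc1 n 0 u (tn n k)
  have hL : LD n u = (L : Set (Fin d → ℝ)) := by
    ext x
    rw [mem_LD_iff hn hu]
    simp [L]
  let g : (Fin d → ℝ) → Finset (Fin d) := fun x => Finset.univ.filter fun i => -1 < x i ∧ x i < 1
  have hg : ∀ M, LD n u ∩ Fface d M = ((L.filter fun x => g x = M : Finset _) : Set _) := by
    intro M
    ext x
    rw [hL, Set.mem_inter_iff, Finset.coe_filter, Set.mem_ofPred_eq, Finset.mem_coe]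
    refine and_congr_right fun hx => ?_
    obtain ⟨k, -, rfl⟩ := Finset.mem_image.1 hx
    rw [pt_mem_Fface hn hu]
    simp only [g, coord_interior_iff hn hu, Int.natCast_dvd_natCast, Finset.ext_iff,
      Finset.mem_filter, Finset.mem_univ, true_and]
    constructor
    · rintro ⟨h1, h2⟩ i
      exact ⟨fun h => by_contra fun hi => h (h2 i hi), h1 i⟩
    · intro h
      exact ⟨fun i => (h i).2, fun i hi => by_contra fun h' => hi ((h i).1 h')⟩
  simp only [hg, Set.ncard_coe_finset]
  rw [hL, Set.ncard_coe_finset]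
  exact Finset.card_eq_sum_card_fiberwise fun _ _ => Finset.mem_coe.2 (Finset.mem_univ _)

/-- Theorem 1.4 b): characterization of points of ℓ^{(n)}_{0,u} on the faces F^d_M,
their multiplicities, and the cardinalities of LD^{(n)}_u and LD^{(n)}_u ∩ F^d_M. -/
theorem stmt_5 {d : ℕ} (hd : 0 < d) (n : Fin d → ℕ) (hn : ∀ j, 0 < n j)
    (hcop : ∀ i j, i ≠ j → Nat.Coprime (n i) (n j))
    (u : Fin d → ℝ) (hu : ∀ j, u j = 1 ∨ u j = -1)
    (M : Finset (Fin d))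
    (A : ℝ → Set ℝ)
    (hA : ∀ t, A t = {s ∈ Set.Ico (0 : ℝ) (2 * Real.pi) | lc1 n 0 u s = lc1 n 0 u t}) :
    (∀ l : ℕ, l < 2 * Pp n →
      (((∀ i ∈ M, ¬ (n i ∣ l)) ∧ ∀ i ∉ M, n i ∣ l) ↔ lc1 n 0 u (tn n l) ∈ Fface d M)) ∧
    (∀ l : ℕ, l < 2 * Pp n → ((∀ i ∈ M, ¬ (n i ∣ l)) ∧ ∀ i ∉ M, n i ∣ l) →
      (A (tn n l)).ncard = 2 ^ M.card) ∧
    (LD n u).ncard * 2 ^ d = 2 * ∏ i, (n i + 1) ∧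
    (LD n u ∩ Fface d M).ncard * 2 ^ M.card = 2 * ∏ i ∈ M, (n i - 1) := by
  refine ⟨fun l _ => (pt_mem_Fface hn hu M l).symm, fun l _ hl => ?_, ?_,
    ncard_LD_inter_Fface hd hn hcop hu M⟩
  · rw [hA, fibre_eq hd hn hu, Set.ncard_image_of_injective (f := fun k : ℕ => tn n k) _
      ((tn_injective hn).comp Nat.cast_injective), Set.ncard_coe_finset,
      card_sameNode hd hn hcop M l hl]
  · rw [ncard_LD_eq_sum hn hu, Finset.sum_mul]
    have hexp : ∏ i, (n i + 1) = ∑ M : Finset (Fin d), (∏ i ∈ M, (n i - 1)) * 2 ^ Mᶜ.card := by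
      rw [Finset.prod_congr rfl fun i _ =>
        (by have := hn i; omega : n i + 1 = (n i - 1) + 2), Finset.prod_add,
        Finset.powerset_univ]
      simp only [Finset.prod_const, Finset.compl_eq_univ_sdiff]
    rw [hexp, Finset.mul_sum]
    refine Finset.sum_congr rfl fun M _ => ?_
    have hcard : d = M.card + Mᶜ.card := by
      rw [Finset.card_add_card_compl, Fintype.card_fin]
    rw [← mul_assoc, ← ncard_LD_inter_Fface hd hn hcop hu M, mul_assoc, ← pow_add, ← hcard]
end

section
/- Let n ∈ ℕ^d have pairwise relatively prime entries and set H^{(n)} = {0,…,2p[n]−1}. (a) For every l ∈ ℤ there exists a uniquely determined i ∈ I^{(n)} together with some (not necessarily unique) v ∈ {−1,1}^d such that i_j ≡ v_j·l (mod 2n_j) for all j ∈ {1,…,d}; thus a map i^{(n)} : H^{(n)} → I^{(n)} is well defined by i^{(n)}(l) = i. (b) For l ∈ H^{(n)} and r ∈ {0,1}: i^{(n)}(l) ∈ I^{(n)}_r if and only if l ≡ r (mod 2). (c) For M ⊆ {1,…,d} and i ∈ I^{(n)}_M, the fiber {l ∈ H^{(n)} : i^{(n)}(l) = i} has exactly 2^{#M}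 elements. -/
/-!
Everything is decided coordinatewise. If `b` is the residue of `l` modulo `2 n_j` in `[0, 2 n_j)`,
then for `0 ≤ a ≤ n_j` one has `a ≡ ± l (mod 2 n_j)` exactly when `a = b`, `a + b = 0` or
`a + b = 2 n_j` (`rel_iff`): `a` is the distance from `l` to the nearest multiple of `2 n_j`.
It is therefore unique, and it has the parity of `l` because `2 n_j` is even; this gives (a) and (b).

For (c), `l ↦ (l mod 2 n_j)_j` maps the fiber over `i` into the product of the sets
`{i_j, -i_j} mod 2 n_j` (`coordFiber`), which have two elements for `0 < i_j < n_j` and one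
otherwise. The map is a bijection by the Chinese remainder theorem. The moduli `2 n_j` are not
coprime, but all prescribed residues share one parity `r`, so that `l = r + 2 m` reduces the system
to one for `m` modulo the pairwise coprime `n_j` (`exists_crt`, `crt_unique`).
-/

open Real Set

/-- The index class I^{(n)}_r: 0 ≤ i_j ≤ n_j with i_j ≡ r (mod 2). -/
def IsetR {d : ℕ} (n : Fin d → ℕ) (r : ℕ) : Set (Fin d → ℕ) :=
  {i | ∀ j, i j ≤ n j ∧ i j % 2 = r % 2}

/-- The index set I^{(n)} = I^{(n)}_0 ∪ I^{(n)}_1. -/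
def Iset {d : ℕ} (n : Fin d → ℕ) : Set (Fin d → ℕ) := IsetR n 0 ∪ IsetR n 1

/-- The subclass I^{(n)}_{M,r}: indices in I^{(n)}_r with 0 < i_j < n_j exactly for j ∈ M. -/
def IsetMR {d : ℕ} (n : Fin d → ℕ) (M : Finset (Fin d)) (r : ℕ) : Set (Fin d → ℕ) :=
  {i ∈ IsetR n r | ∀ j, (0 < i j ∧ i j < n j) ↔ j ∈ M}

/-- I^{(n)}_M = I^{(n)}_{M,0} ∪ I^{(n)}_{M,1}. -/
def IsetM {d : ℕ} (n : Fin d → ℕ) (M : Finset (Fin d)) : Set (Fin d → ℕ) :=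
  IsetMR n M 0 ∪ IsetMR n M 1

/-- The defining relation for the map i^{(n)} : H^{(n)} → I^{(n)}:
i_j ≡ v_j·l (mod 2n_j) for all j, for some choice of signs v. -/
def RelI {d : ℕ} (n : Fin d → ℕ) (l : ℤ) (i : Fin d → ℕ) : Prop :=
  ∃ v : Fin d → ℤ, (∀ j, v j = 1 ∨ v j = -1) ∧
    ∀ j, (i j : ℤ) ≡ v j * l [ZMOD (2 * (n j : ℤ))]

theorem rel_iff {n a : ℕ} (hn : 0 < n) (ha : a ≤ n) (l : ℤ) :
    ((a : ℤ) ≡ l [ZMOD 2 * (n : ℤ)] ∨ (a : ℤ) ≡ -l [ZMOD 2 * (n : ℤ)]) ↔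
      ((a : ℤ) = l % (2 * n) ∨ (a : ℤ) + l % (2 * n) = 0 ∨ (a : ℤ) + l % (2 * n) = 2 * n) := by
  have h0 := Int.emod_nonneg l (b := 2 * (n : ℤ)) (by omega)
  have h1 := Int.emod_lt_of_pos l (b := 2 * (n : ℤ)) (by omega)
  have hd := Int.mul_ediv_add_emod l (2 * (n : ℤ))
  set b := l % (2 * (n : ℤ))
  set q := l / (2 * (n : ℤ))
  have e1 : (a : ℤ) ≡ l [ZMOD 2 * (n : ℤ)] ↔ (a : ℤ) = b := by
    unfold Int.ModEq
    rw [Int.emod_eq_of_lt (a := (a : ℤ)) (by omega) (by omega)]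
  have e2 : (a : ℤ) ≡ -l [ZMOD 2 * (n : ℤ)] ↔ (2 * (n : ℤ)) ∣ (a + b) := by
    rw [Int.modEq_comm, Int.modEq_iff_dvd, ← hd,
      show (a : ℤ) - -(2 * n * q + b) = a + b + 2 * n * q by ring]
    exact dvd_add_left (dvd_mul_right _ _)
  rw [e1, e2]
  refine or_congr Iff.rfl ⟨?_, ?_⟩
  · rintro ⟨k, hk⟩
    have hk0 : 0 ≤ k := by
      by_contra h
      nlinarith
    have hk1 : k < 2 := by
      by_contra h
      nlinarith
    interval_cases k
    · left; omega
    · right; omega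
  · rintro (h | h) <;> rw [h]
    exact dvd_zero _

theorem relI_iff {d : ℕ} (n : Fin d → ℕ) (l : ℤ) (i : Fin d → ℕ) :
    RelI n l i ↔ ∀ j, ((i j : ℤ) ≡ l [ZMOD 2 * (n j : ℤ)] ∨ (i j : ℤ) ≡ -l [ZMOD 2 * (n j : ℤ)]) := by
  constructor
  · rintro ⟨v, hv, h⟩ j
    have := h j
    rcases hv j with e | e <;> rw [e] at this <;> simp at this <;> simp [this]
  · intro h
    choose v hv using fun j => show ∃ v : ℤ, (v = 1 ∨ v = -1) ∧
        (i j : ℤ) ≡ v * l [ZMOD 2 * (n j : ℤ)] from by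
      rcases h j with h | h
      · exact ⟨1, by simp, by simpa using h⟩
      · exact ⟨-1, by simp, by simpa using h⟩
    exact ⟨v, fun j => (hv j).1, fun j => (hv j).2⟩

/-- Reduction modulo `2 n` preserves parity. -/
theorem emod_parity (l : ℤ) (n : ℕ) : l % (2 * n) % 2 = l % 2 :=
  Int.emod_emod_of_dvd l (dvd_mul_right 2 (n : ℤ))

/-- The residues `l` in `[0, 2 n)` with `a ≡ ± l (mod 2 n)`, for `0 < n` and `a ≤ n`. -/
def coordFiber (n a : ℕ) : Finset ℕ := {a, (2 * n - a) % (2 * n)}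

/-- For `a > 0` the outer reduction modulo `2 n` in `coordFiber` is void; for `a = 0` it gives
`0`. -/
theorem coordFiber_neg {n a : ℕ} (ha : a ≤ n) :
    (a = 0 ∧ (2 * n - a) % (2 * n) = 0) ∨ (0 < a ∧ (2 * n - a) % (2 * n) = 2 * n - a) := by
  rcases Nat.eq_zero_or_pos a with h | h
  · left; simp [h]
  · right; exact ⟨h, Nat.mod_eq_of_lt (by omega)⟩

theorem mem_coordFiber {n a : ℕ} (hn : 0 < n) (ha : a ≤ n) (b : ℕ) :
    b ∈ coordFiber n a ↔ b < 2 * n ∧ (a = b ∨ a + b = 0 ∨ a + b = 2 * n) := by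
  simp only [coordFiber, Finset.mem_insert, Finset.mem_singleton]
  have := coordFiber_neg ha
  omega

theorem card_coordFiber {n a : ℕ} (hn : 0 < n) (ha : a ≤ n) :
    (coordFiber n a).card = if 0 < a ∧ a < n then 2 else 1 := by
  have := coordFiber_neg ha
  unfold coordFiber
  split_ifs with h
  · exact Finset.card_pair (by omega)
  · rw [show (2 * n - a) % (2 * n) = a by omega]; simp

theorem relI_nat_iff {d : ℕ} {n : Fin d → ℕ} (hn : ∀ j, 0 < n j) {i : Fin d → ℕ}
    (hi : ∀ j, i j ≤ n j) (l : ℕ) :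
    RelI n l i ↔ ∀ j, l % (2 * n j) ∈ coordFiber (n j) (i j) := by
  rw [relI_iff]
  refine forall_congr' fun j => ?_
  rw [rel_iff (hn j) (hi j), mem_coordFiber (hn j) (hi j)]
  have h1 := Nat.mod_lt l (y := 2 * n j) (by have := hn j; omega)
  have h2 : (l : ℤ) % (2 * (n j : ℤ)) = ((l % (2 * n j) : ℕ) : ℤ) := by push_cast; rfl
  rw [h2]
  omega

theorem Iset_le {d : ℕ} {n : Fin d → ℕ} {i : Fin d → ℕ} (hi : i ∈ Iset n) (j : Fin d) :
    i j ≤ n j := by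
  rcases hi with h | h <;> exact (h j).1

/-- Existence in the Chinese remainder theorem for the moduli `2 n_j`, whose pairwise gcd is `2`:
solvable when all prescribed residues have the same parity `r`. -/
theorem exists_crt_s6 {d : ℕ} {n : Fin d → ℕ} (hn : ∀ j, 0 < n j)
    (hcop : ∀ i j, i ≠ j → Nat.Coprime (n i) (n j)) (a : Fin d → ℕ) (r : ℕ) (hr : r ≤ 1)
    (ha : ∀ j, a j < 2 * n j ∧ a j % 2 = r) :
    ∃ l < 2 * Pp n, ∀ j, l % (2 * n j) = a j := by
  have pp : Set.Pairwise (↑(Finset.univ : Finset (Fin d))) (Function.onFun Nat.Coprime n) :=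
    fun i _ j _ hij => hcop i j hij
  have hne : ∀ j ∈ (Finset.univ : Finset (Fin d)), n j ≠ 0 := fun j _ => (hn j).ne'
  have hlt := Nat.chineseRemainderOfFinset_lt_prod (fun j => a j / 2) n hne pp
  have hm := (Nat.chineseRemainderOfFinset (fun j => a j / 2) n Finset.univ hne pp).2
  set m := (Nat.chineseRemainderOfFinset (fun j => a j / 2) n Finset.univ hne pp : ℕ)
  refine ⟨r + 2 * m, by unfold Pp; omega, fun j => ?_⟩
  have h := hm j (Finset.mem_univ j)
  have h2 : r + 2 * m ≡ r + 2 * (a j / 2) [MOD 2 * n j] :=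
    Nat.ModEq.add_left r (Nat.ModEq.mul_left' 2 h)
  have h3 := ha j
  rw [show r + 2 * (a j / 2) = a j by omega] at h2
  exact Eq.trans h2 (Nat.mod_eq_of_lt h3.1)

theorem crt_unique {d : ℕ} (hd : 0 < d) {n : Fin d → ℕ}
    (hcop : ∀ i j, i ≠ j → Nat.Coprime (n i) (n j)) {l m : ℕ} (hl : l < 2 * Pp n)
    (hm : m < 2 * Pp n) (h : ∀ j, l % (2 * n j) = m % (2 * n j)) : l = m := by
  have hdvd : ∀ j, (2 * (n j : ℤ)) ∣ (m : ℤ) - l := fun j => by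
    have := Nat.modEq_iff_dvd.1 (h j)
    exact_mod_cast this
  -- a coordinate exists since `0 < d`; it forces `l` and `m` to have the same parity
  obtain ⟨k, hk⟩ : (2 : ℤ) ∣ (m : ℤ) - l := (dvd_mul_right _ _).trans (hdvd ⟨0, hd⟩)
  have hp : ((Pp n : ℕ) : ℤ) ∣ k := by
    unfold Pp
    push_cast
    refine Finset.prod_dvd_of_coprime (fun i _ j _ hij => ?_) fun j _ => ?_
    · exact Nat.isCoprime_iff_coprime.2 (hcop i j hij)
    · have := hdvd j
      rw [hk] at this
      exact (mul_dvd_mul_iff_left two_ne_zero).1 this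
  have h2 : (((2 * Pp n : ℕ)) : ℤ) ∣ (m : ℤ) - l := by
    rw [hk]; push_cast; exact mul_dvd_mul_left 2 hp
  exact Nat.ModEq.eq_of_lt_of_lt (Nat.modEq_iff_dvd.2 h2) hl hm

theorem ncard_fiber {d : ℕ} (hd : 0 < d) {n : Fin d → ℕ} (hn : ∀ j, 0 < n j)
    (hcop : ∀ i j, i ≠ j → Nat.Coprime (n i) (n j)) {M : Finset (Fin d)} {i : Fin d → ℕ}
    (hi : i ∈ IsetM n M) :
    {l : ℕ | l < 2 * Pp n ∧ RelI n l i}.ncard = 2 ^ M.card := by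
  obtain ⟨r, hr, hir, hM⟩ : ∃ r ≤ 1, (∀ j, i j ≤ n j ∧ i j % 2 = r) ∧
      ∀ j, (0 < i j ∧ i j < n j) ↔ j ∈ M := by
    rcases hi with h | h
    · exact ⟨0, by omega, h.1, h.2⟩
    · exact ⟨1, le_rfl, h.1, h.2⟩
  have hle : ∀ j, i j ≤ n j := fun j => (hir j).1
  have hcard : (Fintype.piFinset fun j => coordFiber (n j) (i j)).card = 2 ^ M.card := by
    rw [Fintype.card_piFinset]
    simp_rw [card_coordFiber (hn _) (hle _), hM]
    rw [Finset.prod_ite_mem, Finset.univ_inter, Finset.prod_const]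
  rw [← hcard, ← Set.ncard_coe_finset]
  refine Set.ncard_congr (fun l _ j => l % (2 * n j)) ?_ ?_ ?_
  · rintro l ⟨-, h⟩
    simpa using (relI_nat_iff hn hle l).1 h
  · rintro l m ⟨hl, -⟩ ⟨hm, -⟩ h
    exact crt_unique hd hcop hl hm (fun j => congrFun h j)
  · intro a ha
    have ha' : ∀ j, a j ∈ coordFiber (n j) (i j) := by simpa using ha
    obtain ⟨l, hl, h⟩ := exists_crt_s6 hn hcop a r hr fun j => by
      have h1 := (mem_coordFiber (hn j) (hle j) (a j)).1 (ha' j)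
      have h2 := hir j
      omega
    exact ⟨l, ⟨hl, (relI_nat_iff hn hle l).2 fun j => by rw [h j]; exact ha' j⟩, funext h⟩

/-- Proposition 2.1: a) for every l ∈ ℤ there is a unique i ∈ I^{(n)} related to l;
b) i^{(n)}(l) lies in I^{(n)}_r iff l ≡ r (mod 2); c) for i ∈ I^{(n)}_M the fiber of
i^{(n)} over i inside H^{(n)} = {0,…,2p[n]−1} has 2^{#M} elements. -/
theorem stmt_6 {d : ℕ} (hd : 0 < d) (n : Fin d → ℕ) (hn : ∀ j, 0 < n j)
    (hcop : ∀ i j, i ≠ j → Nat.Coprime (n i) (n j)) :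
    (∀ l : ℤ, ∃! i : Fin d → ℕ, i ∈ Iset n ∧ RelI n l i) ∧
    (∀ l : ℕ, l < 2 * Pp n → ∀ i ∈ Iset n, RelI n l i →
      ∀ r : ℕ, r ≤ 1 → (i ∈ IsetR n r ↔ l % 2 = r)) ∧
    (∀ M : Finset (Fin d), ∀ i ∈ IsetM n M,
      {l : ℕ | l < 2 * Pp n ∧ RelI n l i}.ncard = 2 ^ M.card) := by
  have hpar : ∀ (l : ℤ) (i : Fin d → ℕ), (∀ j, i j ≤ n j) → RelI n l i →
      ∀ j, (i j : ℤ) % 2 = l % 2 := by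
    intro l i hi h j
    have h1 := (rel_iff (hn j) (hi j) l).1 ((relI_iff n l i).1 h j)
    have h2 := emod_parity l (n j)
    omega
  refine ⟨fun l => ?_, ?_, fun M i hi => ncard_fiber hd hn hcop hi⟩
  · have hex : ∀ j, ∃ a : ℕ, a ≤ n j ∧
        ((a : ℤ) ≡ l [ZMOD 2 * (n j : ℤ)] ∨ (a : ℤ) ≡ -l [ZMOD 2 * (n j : ℤ)]) := by
      intro j
      have hj := hn j
      have h0 := Int.emod_nonneg l (b := 2 * (n j : ℤ)) (by omega)
      have h1 := Int.emod_lt_of_pos l (b := 2 * (n j : ℤ)) (by omega)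
      -- fold the residue into `[0, n j]` by the reflection `b ↦ 2 n j - b`
      obtain ⟨a, ha⟩ := Int.eq_ofNat_of_zero_le
        (show 0 ≤ min (l % (2 * n j)) (2 * n j - l % (2 * n j)) by omega)
      have hle : a ≤ n j := by omega
      exact ⟨a, hle, (rel_iff hj hle l).2 (by omega)⟩
    choose i hi hrel using hex
    have hR := (relI_iff n l i).2 hrel
    refine ⟨i, ⟨?_, hR⟩, ?_⟩
    · have hp := hpar l i hi hR
      rcases Int.emod_two_eq_zero_or_one l with e | e
      · left; intro j; have := hp j; exact ⟨hi j, by omega⟩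
      · right; intro j; have := hp j; exact ⟨hi j, by omega⟩
    · rintro i' ⟨hi', hR'⟩
      funext j
      have hj := hn j
      have h0 := Int.emod_nonneg l (b := 2 * (n j : ℤ)) (by omega)
      have h1 := Int.emod_lt_of_pos l (b := 2 * (n j : ℤ)) (by omega)
      have hle := Iset_le hi' j
      have hle2 := hi j
      have a1 := (rel_iff hj hle l).1 ((relI_iff n l i').1 hR' j)
      have a2 := (rel_iff hj hle2 l).1 (hrel j)
      omega
  · intro l _ i hi hR r hr
    have hp := hpar l i (Iset_le hi) hR
    constructor
    · intro h
      have h1 := (h ⟨0, hd⟩).2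
      have h2 := hp ⟨0, hd⟩
      omega
    · intro h j
      have h2 := hp j
      exact ⟨Iset_le hi j, by omega⟩
end

section
/- Let n ∈ ℕ^d have pairwise relatively prime entries and let C^{(n)} = {x ∈ [−1,1]^d : T_{n_1}(x_1) = T_{n_2}(x_2) = … = T_{n_d}(x_d)}. Then C^{(n)} = ℓ^{(n)}_{0,1}([0,2π)) = ℓ^{(n)}_{0,1}([0,π]). Moreover, for every M ⊆ {1,…,d} and r ∈ {0,1}: LC^{(n)}_{M,r} = { x ∈ F^d_M : T_{n_1}(x_1) = … = T_{n_d}(x_d) = (−1)^r }. -/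
/-!
Write `x j = cos (θ j)`, so that `T_{n_j}(x_j) = cos (n_j θ_j)`. A point of the curve has
`n_j θ_j = p[n] t` for all `j`, hence lies on the variety. Conversely, equality of the cosines
`cos (n_j θ_j)` means that, after changing the signs of some `θ_j`, the angles `n_j θ_j` agree
modulo `2π`; the Chinese remainder theorem then yields one parameter `t` serving all coordinates
(`exists_lc1_eq`). The curve is even and `2π`-periodic, so `t` can be taken in `[0, π]`
(`exists_Icc_lc1_eq`).

The description of the nodes is a coordinatewise statement: on `[-1, 1]`, `T_m(x) = (-1)^r` exactly
at the points `cos (i π / m)` with `0 ≤ i ≤ m` and `i ≡ r` modulo `2` (`Tch_zpt`, `exists_zpt_eq`),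
and such a point is interior exactly when `0 < i < m` (`zpt_mem_Ioo`, `zpt_boundary`).
-/

open Real Set

/-- Chebyshev–Gauß–Lobatto point z^{(m)}_i = cos(iπ/m). -/
noncomputable def zpt (m i : ℕ) : ℝ := Real.cos ((i : ℝ) * Real.pi / (m : ℝ))

/-- The multivariate point z^{(n)}_i. -/
noncomputable def zv {d : ℕ} (n : Fin d → ℕ) (i : Fin d → ℕ) : Fin d → ℝ :=
  fun j => zpt (n j) (i j)

/-- The Chebyshev polynomial of the first kind, as a function: T_m(cos θ) = cos(mθ). -/
noncomputable def Tch (m : ℕ) (x : ℝ) : ℝ := (Polynomial.Chebyshev.T ℝ (m : ℤ)).eval x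

/-- The node class LC^{(n)}_{M,r} = {z^{(n)}_i : i ∈ I^{(n)}_{M,r}}. -/
noncomputable def LCsetMR {d : ℕ} (n : Fin d → ℕ) (M : Finset (Fin d)) (r : ℕ) :
    Set (Fin d → ℝ) :=
  {x | ∃ i ∈ IsetMR n M r, x = zv n i}

lemma Tch_cos (m : ℕ) (θ : ℝ) : Tch m (cos θ) = cos (m * θ) := by
  simp [Tch]

lemma lc1_apply {d : ℕ} (n : Fin d → ℕ) (t : ℝ) (j : Fin d) :
    lc1 n 0 (fun _ => 1) t j = cos (Pc n j * t) := by
  simp [lc1]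

/-- The curve is `2π`-periodic and even, so its trace is already swept out on `[0, π]`. -/
lemma exists_Icc_lc1_eq {d : ℕ} (n : Fin d → ℕ) (t : ℝ) :
    ∃ s ∈ Icc (0 : ℝ) π, lc1 n 0 (fun _ => 1) s = lc1 n 0 (fun _ => 1) t := by
  have hp := toIcoMod_mem_Ico two_pi_pos 0 t
  set u := toIcoMod two_pi_pos 0 t with hu
  have htu : t = u + toIcoDiv two_pi_pos 0 t * (2 * π) := by
    have := toIcoMod_add_toIcoDiv_zsmul two_pi_pos 0 t
    rw [zsmul_eq_mul] at this
    exact this.symm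
  have key : lc1 n 0 (fun _ => 1) u = lc1 n 0 (fun _ => 1) t := by
    funext j
    rw [lc1_apply, lc1_apply, htu]
    have := cos_add_int_mul_two_pi (Pc n j * u) ((Pc n j : ℤ) * toIcoDiv two_pi_pos 0 t)
    rw [← this]
    congr 1
    push_cast
    ring
  by_cases h : u ≤ π
  · exact ⟨u, ⟨hp.1, h⟩, key⟩
  · refine ⟨2 * π - u, ⟨by linarith [hp.2], by linarith⟩, ?_⟩
    rw [← key]
    funext j
    rw [lc1_apply, lc1_apply, ← cos_nat_mul_two_pi_sub (Pc n j * u) (Pc n j)]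
    congr 1
    ring

lemma mul_Pc {d : ℕ} (n : Fin d → ℕ) (j : Fin d) : n j * Pc n j = Pp n :=
  Finset.mul_prod_erase _ _ (Finset.mem_univ j)

lemma exists_int_modEq {d : ℕ} (n : Fin d → ℕ) (hn : ∀ j, 0 < n j)
    (hcop : ∀ i j, i ≠ j → Nat.Coprime (n i) (n j)) (k : Fin d → ℤ) :
    ∃ K : ℤ, ∀ j, ∃ q : ℤ, K = k j + n j * q := by
  obtain ⟨K, hK⟩ := Nat.chineseRemainderOfFinset (fun j => (k j % (n j : ℤ)).toNat) n
    Finset.univ (fun j _ => (hn j).ne') (fun i _ j _ hij => hcop i j hij)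
  refine ⟨K, fun j => ?_⟩
  have h := Int.natCast_modEq_iff.2 (hK j (Finset.mem_univ j))
  have hj : (n j : ℤ) ≠ 0 := by exact_mod_cast (hn j).ne'
  rw [Int.toNat_of_nonneg (Int.emod_nonneg _ hj)] at h
  obtain ⟨q, hq⟩ := (h.trans (Int.mod_modEq _ _)).symm.dvd
  exact ⟨q, by linarith⟩

/-- Surjectivity onto the variety. The angles `θ j` with `cos (θ j) = x j` can be chosen, up to
sign, with `n j * θ j = s + 2π k j` for one common `s`. A parameter `t` with
`p[n] t = s + 2π K` then works as soon as `K ≡ k j` modulo every `n j`. -/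
lemma exists_lc1_eq {d : ℕ} (hd : 0 < d) (n : Fin d → ℕ) (hn : ∀ j, 0 < n j)
    (hcop : ∀ i j, i ≠ j → Nat.Coprime (n i) (n j)) (x : Fin d → ℝ)
    (hx : ∀ j, x j ∈ Icc (-1 : ℝ) 1) (h : ∀ i j, Tch (n i) (x i) = Tch (n j) (x j)) :
    ∃ t, lc1 n 0 (fun _ => 1) t = x := by
  have hc : ∀ j, cos (arccos (x j)) = x j := fun j => cos_arccos (hx j).1 (hx j).2
  let z : Fin d := ⟨0, hd⟩
  let s : ℝ := n z * arccos (x z)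
  have key : ∀ j, ∃ θ : ℝ, ∃ k : ℤ, cos θ = x j ∧ n j * θ = s + 2 * π * k := by
    intro j
    have e : cos s = cos (n j * arccos (x j)) := by
      rw [← Tch_cos, ← Tch_cos, hc, hc]
      exact h z j
    obtain ⟨k, hk | hk⟩ := cos_eq_cos_iff.1 e
    · exact ⟨arccos (x j), k, hc j, by rw [hk]; ring⟩
    · refine ⟨-arccos (x j), -k, by rw [cos_neg, hc], ?_⟩
      push_cast
      linarith
  choose θ k hθ hk using key
  obtain ⟨K, hK⟩ := exists_int_modEq n hn hcop k
  have hP : (Pp n : ℝ) ≠ 0 := by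
    exact_mod_cast (Finset.prod_pos fun j _ => hn j).ne'
  refine ⟨(s + 2 * π * K) / Pp n, ?_⟩
  funext j
  obtain ⟨q, hq⟩ := hK j
  have hj : (n j : ℝ) ≠ 0 := by exact_mod_cast (hn j).ne'
  have hm : (n j : ℝ) * Pc n j = Pp n := by exact_mod_cast mul_Pc n j
  have hq' : (K : ℝ) = k j + n j * q := by exact_mod_cast hq
  rw [lc1_apply, ← hθ j, ← cos_add_int_mul_two_pi (θ j) q]
  congr 1
  apply mul_left_cancel₀ hj
  rw [← mul_assoc, hm, mul_div_cancel₀ _ hP, hq']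
  linear_combination -hk j

/-- Every point of the curve satisfies `T_{n_j}(x_j) = cos (p[n] t)`, independently of `j`. -/
lemma lc1_mem {d : ℕ} (n : Fin d → ℕ) (t : ℝ) :
    (∀ j, lc1 n 0 (fun _ => 1) t j ∈ Icc (-1 : ℝ) 1) ∧
      ∀ i j, Tch (n i) (lc1 n 0 (fun _ => 1) t i) = Tch (n j) (lc1 n 0 (fun _ => 1) t j) := by
  have hT : ∀ j, Tch (n j) (lc1 n 0 (fun _ => 1) t j) = cos (Pp n * t) := by
    intro j
    rw [lc1_apply, Tch_cos, ← mul_Pc n j]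
    push_cast
    rw [mul_assoc]
  refine ⟨fun j => ?_, fun i j => by rw [hT, hT]⟩
  rw [lc1_apply]
  exact cos_mem_Icc _

lemma Tch_zpt {m : ℕ} (hm : 0 < m) (i : ℕ) : Tch m (zpt m i) = (-1) ^ i := by
  have : (m : ℝ) ≠ 0 := by exact_mod_cast hm.ne'
  rw [zpt, Tch_cos, mul_div_cancel₀ _ this, cos_nat_mul_pi]

lemma neg_one_pow_eq_iff (a b : ℕ) : (-1 : ℝ) ^ a = (-1) ^ b ↔ a % 2 = b % 2 := by
  rw [neg_one_pow_eq_pow_mod_two, neg_one_pow_eq_pow_mod_two (n := b)]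
  rcases Nat.mod_two_eq_zero_or_one a with h | h <;>
    rcases Nat.mod_two_eq_zero_or_one b with h' | h' <;> norm_num [h, h']

/-- The points of `[-1, 1]` where `T_m` takes an extremal value are Chebyshev–Gauß–Lobatto
points, and the parity of the index is the sign. -/
lemma exists_zpt_eq {m r : ℕ} (hm : 0 < m) {x : ℝ} (hx : x ∈ Icc (-1 : ℝ) 1)
    (h : Tch m x = (-1) ^ r) : ∃ i, i ≤ m ∧ i % 2 = r % 2 ∧ x = zpt m i := by
  have hm' : (0 : ℝ) < m := by exact_mod_cast hm
  have hc : cos (arccos x) = x := cos_arccos hx.1 hx.2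
  have hs : sin (m * arccos x) = 0 := by
    rw [← hc, Tch_cos] at h
    rw [sin_eq_zero_iff_cos_eq]
    rw [h]
    exact neg_one_pow_eq_or ℝ r
  obtain ⟨k, hk⟩ := sin_eq_zero_iff.1 hs
  have hk0 : (0 : ℝ) ≤ k := by
    have : 0 ≤ k * π := hk ▸ mul_nonneg hm'.le (arccos_nonneg x)
    exact nonneg_of_mul_nonneg_left this pi_pos
  lift k to ℕ using by exact_mod_cast hk0
  have hk' : (k : ℝ) * π = m * arccos x := by exact_mod_cast hk
  have hxz : x = zpt m k := by
    rw [zpt, hk', mul_div_cancel_left₀ _ hm'.ne', hc]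
  refine ⟨k, ?_, ?_, hxz⟩
  · have : (k : ℝ) * π ≤ m * π :=
      hk' ▸ mul_le_mul_of_nonneg_left (arccos_le_pi x) hm'.le
    exact_mod_cast le_of_mul_le_mul_right this pi_pos
  · rwa [hxz, Tch_zpt hm, neg_one_pow_eq_iff] at h

lemma zpt_zero (m : ℕ) : zpt m 0 = 1 := by simp [zpt]

lemma zpt_self {m : ℕ} (hm : 0 < m) : zpt m m = -1 := by
  have : (m : ℝ) ≠ 0 := by exact_mod_cast hm.ne'
  rw [zpt, mul_div_cancel_left₀ _ this, cos_pi]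

lemma zpt_mem_Ioo {m i : ℕ} (h0 : 0 < i) (hi : i < m) : -1 < zpt m i ∧ zpt m i < 1 := by
  have hi0 : (0 : ℝ) < i := by exact_mod_cast h0
  have him : (i : ℝ) < m := by exact_mod_cast hi
  have hp : 0 < (i : ℝ) * π / m := div_pos (mul_pos hi0 pi_pos) (hi0.trans him)
  have hq : (i : ℝ) * π / m < π := by
    rw [div_lt_iff₀ (hi0.trans him), mul_comm π]
    exact mul_lt_mul_of_pos_right him pi_pos
  constructor
  · rw [zpt, ← cos_pi]
    exact cos_lt_cos_of_nonneg_of_le_pi hp.le le_rfl hq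
  · rw [zpt, ← cos_zero]
    exact cos_lt_cos_of_nonneg_of_le_pi le_rfl hq.le hp

lemma zpt_boundary {m i : ℕ} (hi : i ≤ m) (hm : 0 < m) (h : ¬ (0 < i ∧ i < m)) :
    zpt m i = -1 ∨ zpt m i = 1 := by
  rcases Nat.eq_zero_or_pos i with rfl | h0
  · exact Or.inr (zpt_zero m)
  · obtain rfl : i = m := by omega
    exact Or.inl (zpt_self hm)

/-- Theorem 2.3: the Chebyshev variety C^{(n)} is the image of the degenerate Lissajous
curve ℓ^{(n)}_{0,1} on [0,2π) and on [0,π], and LC^{(n)}_{M,r} consists of the points of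
F^d_M on which all T_{n_i}(x_i) equal (−1)^r. -/
theorem stmt_8 {d : ℕ} (hd : 0 < d) (n : Fin d → ℕ) (hn : ∀ j, 0 < n j)
    (hcop : ∀ i j, i ≠ j → Nat.Coprime (n i) (n j))
    (C : Set (Fin d → ℝ))
    (hC : C = {x | (∀ j, x j ∈ Set.Icc (-1 : ℝ) 1) ∧
      ∀ i j, Tch (n i) (x i) = Tch (n j) (x j)}) :
    C = lc1 n 0 (fun _ => 1) '' Set.Ico (0 : ℝ) (2 * Real.pi) ∧
    C = lc1 n 0 (fun _ => 1) '' Set.Icc (0 : ℝ) Real.pi ∧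
    ∀ (M : Finset (Fin d)) (r : ℕ), r ≤ 1 →
      LCsetMR n M r = {x ∈ Fface d M | ∀ i, Tch (n i) (x i) = (-1 : ℝ) ^ r} := by
  subst hC
  refine ⟨?_, ?_, ?_⟩
  · apply Subset.antisymm
    · rintro x ⟨hx, h⟩
      obtain ⟨t, rfl⟩ := exists_lc1_eq hd n hn hcop x hx h
      obtain ⟨s, hs, e⟩ := exists_Icc_lc1_eq n t
      exact ⟨s, ⟨hs.1, by linarith [hs.2, pi_pos]⟩, e⟩
    · rintro _ ⟨t, -, rfl⟩
      exact lc1_mem n t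
  · apply Subset.antisymm
    · rintro x ⟨hx, h⟩
      obtain ⟨t, rfl⟩ := exists_lc1_eq hd n hn hcop x hx h
      exact exists_Icc_lc1_eq n t
    · rintro _ ⟨t, -, rfl⟩
      exact lc1_mem n t
  · intro M r _
    ext x
    constructor
    · rintro ⟨i, ⟨hi, hM⟩, rfl⟩
      refine ⟨⟨fun j hj => ?_, fun j hj => ?_⟩, fun j => ?_⟩
      · exact zpt_mem_Ioo ((hM j).2 hj).1 ((hM j).2 hj).2
      · exact zpt_boundary (hi j).1 (hn j) fun h => hj ((hM j).1 h)
      · rw [zv, Tch_zpt (hn j), neg_one_pow_eq_iff]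
        exact (hi j).2
    · rintro ⟨⟨hF, hF'⟩, hT⟩
      have hx : ∀ j, x j ∈ Icc (-1 : ℝ) 1 := by
        intro j
        by_cases hj : j ∈ M
        · exact ⟨(hF j hj).1.le, (hF j hj).2.le⟩
        · rcases hF' j hj with h | h <;> rw [h] <;> norm_num
      choose i hi hr hz using fun j => exists_zpt_eq (hn j) (hx j) (hT j)
      refine ⟨i, ⟨fun j => ⟨hi j, hr j⟩, fun j => ⟨fun h => ?_, fun hj => ?_⟩⟩, funext hz⟩
      · by_contra hj
        have h1 := zpt_mem_Ioo h.1 h.2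
        rw [← hz j] at h1
        rcases hF' j hj with h2 | h2 <;> linarith [h1.1, h1.2]
      · by_contra h
        have h1 := hF j hj
        rcases zpt_boundary (hi j) (hn j) h with h2 | h2 <;>
          rw [← hz j] at h2 <;> linarith [h1.1, h1.2]
end

section
/- Let n ∈ ℕ^d have pairwise relatively prime entries and let γ ∈ ℕ_0^d. If the weighted sum Σ_{i ∈ I^{(n)}} w^{(n)}_i · χ^{(n)}_γ(i) is nonzero, then there exists h ∈ ℕ_0^d with γ_i = h_i·n_i for all i ∈ {1,…,d} and Σ_{i=1}^d h_i even. Conversely, if such an h exists, then Σ_{i ∈ I^{(n)}} w^{(n)}_i · χ^{(n)}_γ(i) = 1. -/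
/-!
Up to the factor `1 / (2 p[n])`, the weighted sum over `I^{(n)}_r` factors as `∏ j, S_j r`, where
`S_j r` is the sum of `c_k cos (γ_j k π / n_j)` over `0 ≤ k ≤ n_j` with `k ≡ r (mod 2)`, and
`c_k` is `2` at interior points and `1` at the two end points. The reflection `k ↦ 2 n_j - k`
preserves both the parity and the cosine, so `S_j r` is the unweighted sum over all `k` of parity
`r` in `[0, 2 n_j)`, that is `∑_{m < n_j} cos (γ_j (2 m + r) π / n_j)` (`nodeSum_eq`).
This is a sum over a full period: it vanishes unless `n_j ∣ γ_j` (`nodeSum_eq_zero`), and equals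
`n_j (-1) ^ (h_j r)` if `γ_j = h_j n_j` (`nodeSum_mul`). Since `I^{(n)}_0` and `I^{(n)}_1` are
disjoint, the whole sum is `0` unless all `n_j ∣ γ_j`, and it is `(1 + (-1) ^ ∑ h_j) / 2`
otherwise.
-/

open Real Set

/-- The set M(i) = {j : 0 < i_j < n_j}. -/
def Mset {d : ℕ} (n : Fin d → ℕ) (i : Fin d → ℕ) : Finset (Fin d) :=
  Finset.univ.filter (fun j => 0 < i j ∧ i j < n j)

/-- The weight w^{(n)}_i = 2^{#M(i)}/(2p[n]). -/
noncomputable def wt {d : ℕ} (n : Fin d → ℕ) (i : Fin d → ℕ) : ℝ :=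
  (2 : ℝ) ^ (Mset n i).card / (2 * (Pp n : ℝ))

/-- The function χ^{(n)}_γ(i) = ∏_j cos(γ_j i_j π / n_j). -/
noncomputable def chi {d : ℕ} (n : Fin d → ℕ) (γ : Fin d → ℕ) (i : Fin d → ℕ) : ℝ :=
  ∏ j, Real.cos ((γ j : ℝ) * (i j : ℝ) * Real.pi / (n j : ℝ))

/-- The one-dimensional factor `S r`: the sum of `cos (g k π / n)` over `0 ≤ k ≤ n` with
`k % 2 = r`, where interior points count twice. -/
noncomputable def nodeSum (n g r : ℕ) : ℝ :=
  ∑ k ∈ (Finset.range (n + 1)).filter (fun k => k % 2 = r),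
    (if 0 < k ∧ k < n then (2 : ℝ) else 1) * Real.cos ((g : ℝ) * (k : ℝ) * Real.pi / (n : ℝ))

/-- Unfolding by reflection: the trapezoidal sum over `[0, n]` of a function symmetric about `n`
is the plain sum over `[0, 2 n)`. -/
theorem sum_reflect_two_mul (n : ℕ) (hn : 0 < n) (f : ℕ → ℝ)
    (hf : ∀ k ≤ 2 * n, f (2 * n - k) = f k) :
    ∑ k ∈ Finset.range (n + 1), (if 0 < k ∧ k < n then (2 : ℝ) else 1) * f k
      = ∑ k ∈ Finset.range (2 * n), f k := by
  obtain ⟨m, rfl⟩ : ∃ m, n = m + 1 := ⟨n - 1, by omega⟩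
  have h1 : ∑ k ∈ Finset.range m,
      (if 0 < k + 1 ∧ k + 1 < m + 1 then (2 : ℝ) else 1) * f (k + 1)
      = ∑ k ∈ Finset.range m, 2 * f (k + 1) := by
    refine Finset.sum_congr rfl fun k hk => ?_
    rw [if_pos ⟨by omega, by have := Finset.mem_range.1 hk; omega⟩]
  have h2 : ∑ k ∈ Finset.range m, f (m + 1 + (k + 1)) = ∑ k ∈ Finset.range m, f (k + 1) := by
    rw [← Finset.sum_range_reflect (fun k => f (k + 1))]
    refine Finset.sum_congr rfl fun k hk => ?_
    have hk := Finset.mem_range.1 hk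
    rw [← hf _ (by omega)]
    congr 1
    omega
  rw [Finset.sum_range_succ, Finset.sum_range_succ', h1, two_mul (m + 1), Finset.sum_range_add,
    Finset.sum_range_succ' (fun k => f k), Finset.sum_range_succ' (fun k => f (m + 1 + k)), h2,
    ← Finset.mul_sum]
  simp
  ring

theorem sum_range_two_mul (n : ℕ) (f : ℕ → ℝ) :
    ∑ k ∈ Finset.range (2 * n), f k = ∑ m ∈ Finset.range n, (f (2 * m) + f (2 * m + 1)) := by
  induction n with
  | zero => simp
  | succ n ih =>
    rw [Finset.sum_range_succ _ n, ← ih, show 2 * (n + 1) = 2 * n + 1 + 1 by ring,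
      Finset.sum_range_succ, Finset.sum_range_succ]
    ring

theorem nodeSum_eq (n g r : ℕ) (hn : 0 < n) (hr : r < 2) :
    nodeSum n g r = ∑ m ∈ Finset.range n,
      Real.cos ((g : ℝ) * r * Real.pi / n + 2 * m * (g * Real.pi / n)) := by
  have hn' : (n : ℝ) ≠ 0 := by positivity
  set f : ℕ → ℝ := fun k =>
    if k % 2 = r then Real.cos ((g : ℝ) * (k : ℝ) * Real.pi / (n : ℝ)) else 0 with hf
  have h1 : nodeSum n g r
      = ∑ k ∈ Finset.range (n + 1), (if 0 < k ∧ k < n then (2 : ℝ) else 1) * f k := by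
    rw [nodeSum, Finset.sum_filter]
    refine Finset.sum_congr rfl fun k _ => ?_
    simp only [hf]
    split_ifs <;> simp
  rw [h1, sum_reflect_two_mul n hn, sum_range_two_mul]
  · refine Finset.sum_congr rfl fun m _ => ?_
    have e0 : 2 * m % 2 = 0 := by omega
    have e1 : (2 * m + 1) % 2 = 1 := by omega
    simp only [hf, e0, e1]
    interval_cases r
    · simp
      congr 1
      ring
    · simp
      congr 1
      ring
  · intro k hk
    have e : (2 * n - k) % 2 = k % 2 := by omega
    simp only [hf, e]
    congr 1
    rw [Nat.cast_sub hk, ← Real.cos_nat_mul_two_pi_sub _ g]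
    congr 1
    push_cast
    field_simp
    ring

theorem nodeSum_eq_zero (n g r : ℕ) (hn : 0 < n) (hr : r < 2) (hg : ¬ n ∣ g) :
    nodeSum n g r = 0 := by
  have hn' : (n : ℝ) ≠ 0 := by positivity
  rw [nodeSum_eq n g r hn hr]
  set a : ℝ := (g : ℝ) * r * Real.pi / n
  set θ : ℝ := g * Real.pi / n with hθ
  have hs : Real.sin θ ≠ 0 := by
    intro h
    obtain ⟨k, hk⟩ := Real.sin_eq_zero_iff.1 h
    apply hg
    have h1 : (k : ℝ) * n = g := by
      have := Real.pi_ne_zero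
      rw [hθ] at hk
      field_simp at hk
      linarith
    have h2 : (k : ℤ) * n = g := by exact_mod_cast h1
    exact Int.natCast_dvd_natCast.1 ⟨k, by rw [← h2, mul_comm]⟩
  -- Multiplying by `2 * sin θ` makes the sum telescope.
  have tel : ∀ N : ℕ, 2 * Real.sin θ * ∑ m ∈ Finset.range N, Real.cos (a + 2 * m * θ)
      = Real.sin (a - θ + N * (2 * θ)) - Real.sin (a - θ) := by
    intro N
    induction N with
    | zero => simp
    | succ N ih =>
      rw [Finset.sum_range_succ, mul_add, ih]
      have e1 : a - θ + ((N + 1 : ℕ) : ℝ) * (2 * θ) = (a + 2 * N * θ) + θ := by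
        push_cast; ring
      have e2 : a - θ + (N : ℝ) * (2 * θ) = (a + 2 * N * θ) - θ := by ring
      rw [e1, e2, Real.sin_add, Real.sin_sub (a + 2 * N * θ)]
      ring
  have h := tel n
  have e : (n : ℝ) * (2 * θ) = g * (2 * Real.pi) := by
    rw [hθ]; field_simp
  rw [e, Real.sin_add_nat_mul_two_pi, sub_self] at h
  simpa [hs] using h

theorem nodeSum_mul (n h r : ℕ) (hn : 0 < n) (hr : r < 2) :
    nodeSum n (h * n) r = n * (-1) ^ (h * r) := by
  have hn' : (n : ℝ) ≠ 0 := by positivity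
  rw [nodeSum_eq n _ r hn hr]
  have : ∀ m ∈ Finset.range n, Real.cos (((h * n : ℕ) : ℝ) * r * Real.pi / n
      + 2 * m * ((h * n : ℕ) * Real.pi / n)) = (-1) ^ (h * r) := by
    intro m _
    have e : ((h * n : ℕ) : ℝ) * r * Real.pi / n + 2 * m * ((h * n : ℕ) * Real.pi / n)
        = ((h * r : ℕ) : ℝ) * Real.pi + ((m * h : ℕ) : ℝ) * (2 * Real.pi) := by
      push_cast; field_simp
    rw [e, Real.cos_add_nat_mul_two_pi, Real.cos_nat_mul_pi]
  rw [Finset.sum_congr rfl this]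
  simp

theorem IsetR_eq {d : ℕ} (n : Fin d → ℕ) (r : ℕ) (hr : r < 2) :
    IsetR n r = ↑(Fintype.piFinset fun j =>
      (Finset.range (n j + 1)).filter (fun k => k % 2 = r)) := by
  ext i
  simp [IsetR, Nat.mod_eq_of_lt hr]

theorem sum_IsetR {d : ℕ} (n γ : Fin d → ℕ) (r : ℕ) (hr : r < 2) :
    ∑ᶠ i ∈ IsetR n r, wt n i * chi n γ i = (∏ j, nodeSum (n j) (γ j) r) / (2 * (Pp n : ℝ)) := by
  rw [IsetR_eq n r hr, finsum_mem_coe_finset]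
  simp only [nodeSum]
  rw [Finset.prod_univ_sum, Finset.sum_div]
  refine Finset.sum_congr rfl fun i _ => ?_
  rw [Finset.prod_mul_distrib, ← Finset.prod_filter, Finset.prod_const]
  simp only [wt, chi, Mset]
  ring

theorem sum_Iset {d : ℕ} (hd : 0 < d) (n γ : Fin d → ℕ) :
    ∑ᶠ i ∈ Iset n, wt n i * chi n γ i
      = (∏ j, nodeSum (n j) (γ j) 0 + ∏ j, nodeSum (n j) (γ j) 1) / (2 * (Pp n : ℝ)) := by
  -- Disjointness needs a coordinate to read the parity from, hence `0 < d`.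
  have hdisj : Disjoint (IsetR n 0) (IsetR n 1) := by
    rw [Set.disjoint_left]
    intro i h0 h1
    have a := (h0 ⟨0, hd⟩).2
    have b := (h1 ⟨0, hd⟩).2
    omega
  have hfin : ∀ r < 2, (IsetR n r).Finite := fun r hr => by
    rw [IsetR_eq n r hr]; exact Finset.finite_toSet _
  rw [Iset, finsum_mem_union hdisj (hfin 0 (by norm_num)) (hfin 1 (by norm_num)),
    sum_IsetR n γ 0 (by norm_num), sum_IsetR n γ 1 (by norm_num), add_div]

theorem sum_Iset_mul {d : ℕ} (hd : 0 < d) (n : Fin d → ℕ) (hn : ∀ j, 0 < n j)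
    (γ h : Fin d → ℕ) (hγ : ∀ j, γ j = h j * n j) :
    ∑ᶠ i ∈ Iset n, wt n i * chi n γ i = (1 + (-1) ^ (∑ j, h j)) / 2 := by
  have key : ∀ r < 2, ∏ j, nodeSum (n j) (γ j) r = (Pp n : ℝ) * ((-1) ^ (∑ j, h j * r)) := by
    intro r hr
    rw [← Finset.prod_pow_eq_pow_sum, Pp, Nat.cast_prod, ← Finset.prod_mul_distrib]
    exact Finset.prod_congr rfl fun j _ => by rw [hγ j, nodeSum_mul _ _ _ (hn j) hr]
  have hp : (Pp n : ℝ) ≠ 0 := by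
    rw [Pp, Nat.cast_ne_zero]
    exact Finset.prod_ne_zero_iff.2 fun j _ => (hn j).ne'
  rw [sum_Iset hd, key 0 (by norm_num), key 1 (by norm_num)]
  simp only [mul_zero, Finset.sum_const_zero, pow_zero, mul_one]
  field_simp

/-- Proposition 2.4: the weighted sum of χ^{(n)}_γ over I^{(n)} is nonzero only if
γ_i = h_i n_i with Σ h_i even, in which case the sum equals 1. -/
theorem stmt_9 {d : ℕ} (hd : 0 < d) (n : Fin d → ℕ) (hn : ∀ j, 0 < n j)
    (hcop : ∀ i j, i ≠ j → Nat.Coprime (n i) (n j)) (γ : Fin d → ℕ) :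
    ((∑ᶠ i ∈ Iset n, wt n i * chi n γ i) ≠ 0 →
      ∃ h : Fin d → ℕ, (∀ j, γ j = h j * n j) ∧ Even (∑ j, h j)) ∧
    ((∃ h : Fin d → ℕ, (∀ j, γ j = h j * n j) ∧ Even (∑ j, h j)) →
      ∑ᶠ i ∈ Iset n, wt n i * chi n γ i = 1) := by
  constructor
  · intro hne
    have hdvd : ∀ j, n j ∣ γ j := by
      intro j
      by_contra hj
      apply hne
      rw [sum_Iset hd, Finset.prod_eq_zero (Finset.mem_univ j)
        (nodeSum_eq_zero _ _ 0 (hn j) (by norm_num) hj), Finset.prod_eq_zero (Finset.mem_univ j)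
        (nodeSum_eq_zero _ _ 1 (hn j) (by norm_num) hj)]
      simp
    have hγ : ∀ j, γ j = γ j / n j * n j := fun j => (Nat.div_mul_cancel (hdvd j)).symm
    refine ⟨fun j => γ j / n j, hγ, ?_⟩
    by_contra hodd
    apply hne
    rw [sum_Iset_mul hd n hn γ _ hγ, (Nat.not_even_iff_odd.1 hodd).neg_one_pow]
    norm_num
  · rintro ⟨h, hγ, heven⟩
    rw [sum_Iset_mul hd n hn γ h hγ, heven.neg_one_pow]
    norm_num
end

section
/- Let n ∈ ℕ^d have pairwise relatively prime entries. Then #Γ^{(n)} = (1/2^{d−1})·∏_{i=1}^d (n_i + 1). -/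
/-!
Write `Box = ∏ i, {0, …, n i}`. The group `(ℤ/2)^(d+1)` acts on `Box` by reflecting the chosen
coordinates, `γ i ↦ n i - γ i`. The map `(γ, s) ↦ (s · γ, ∑ i, s i)` is a bijection from
`Gam n × (ℤ/2)^(d+1)` to `Box × ℤ/2`, which gives `#(Gam n) * 2^(d+1) = 2 * ∏ i, (n i + 1)`.

Injectivity amounts to: no two elements of `Gam n` differ by a nonzero `s` of even weight
(`eq_zero_of_reflect_mem`). Such an `s` reflects two coordinates `i ≠ j`, hence replaces the sum
`γ i / n i + γ j / n j` by `2` minus itself, while on `Gam n` these sums are at most `1`, and less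
than `1` away from the exceptional point.

Surjectivity amounts to: every point of `Box` can be moved into `Gam n` by an `s` of prescribed
parity (`exists_reflect_mem`). First reflect all coordinates into `γ i / n i ≤ 1 / 2`. If the parity
is wrong, also reflect the coordinate with the largest ratio `γ k / n k`; if all ratios vanish,
reflect the last one instead, which produces the exceptional point. Coprimality
excludes the ties: two ratios with coprime denominators are never both `1 / 2`, and never
equal and strictly between `0` and `1`.
-/

open Real Set

/-- The spectral index set Γ^{(n)}: γ with γ_i < n_i for all i and
γ_i/n_i + γ_j/n_j < 1 for all i ≠ j, together with the extra element (0,…,0,n_d). -/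
def Gam {d : ℕ} (n : Fin (d + 1) → ℕ) : Set (Fin (d + 1) → ℕ) :=
  {γ | (∀ i, γ i < n i) ∧
    ∀ i j, i ≠ j → (γ i : ℝ) / (n i : ℝ) + (γ j : ℝ) / (n j : ℝ) < 1} ∪
  {Function.update (0 : Fin (d + 1) → ℕ) (Fin.last d) (n (Fin.last d))}

/-- Reflection `γ i ↦ n i - γ i` of the coordinates `i` with `s i ≠ 0`. The subtraction is truncated,
so this is a reflection only for `γ i ≤ n i`. -/
def reflect {m : ℕ} (n : Fin m → ℕ) (s : Fin m → ZMod 2) (γ : Fin m → ℕ) : Fin m → ℕ :=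
  fun i => if s i = 0 then γ i else n i - γ i

lemma reflect_le {m : ℕ} {n : Fin m → ℕ} {s : Fin m → ZMod 2} {γ : Fin m → ℕ}
    (h : ∀ i, γ i ≤ n i) (i : Fin m) : reflect n s γ i ≤ n i := by
  have := h i
  unfold reflect
  split_ifs <;> omega

lemma reflect_reflect {m : ℕ} {n : Fin m → ℕ} (s t : Fin m → ZMod 2) {γ : Fin m → ℕ}
    (h : ∀ i, γ i ≤ n i) : reflect n s (reflect n t γ) = reflect n (s + t) γ := by
  funext i
  have hi := h i
  have key : ∀ a b : ZMod 2, a + b = 0 ↔ (a = 0 ↔ b = 0) := by decide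
  simp only [reflect, Pi.add_apply, key]
  by_cases hs : s i = 0 <;> by_cases ht : t i = 0 <;> simp [hs, ht] <;> omega

lemma reflect_zero {m : ℕ} (n : Fin m → ℕ) (γ : Fin m → ℕ) : reflect n 0 γ = γ := by
  funext i
  simp [reflect]

lemma add_self_zmod_two {m : ℕ} (s : Fin m → ZMod 2) : s + s = 0 := by
  funext i
  exact (by decide : ∀ a : ZMod 2, a + a = 0) (s i)

lemma reflect_self {m : ℕ} {n : Fin m → ℕ} (s : Fin m → ZMod 2) {γ : Fin m → ℕ}
    (h : ∀ i, γ i ≤ n i) : reflect n s (reflect n s γ) = γ := by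
  rw [reflect_reflect s s h, add_self_zmod_two, reflect_zero]

lemma reflect_div {m : ℕ} {n : Fin m → ℕ} (hn : ∀ j, 0 < n j) {s : Fin m → ZMod 2}
    {γ : Fin m → ℕ} (h : ∀ i, γ i ≤ n i) {i : Fin m} (hi : s i ≠ 0) :
    (reflect n s γ i : ℝ) / n i = 1 - (γ i : ℝ) / n i := by
  have : (n i : ℝ) ≠ 0 := by exact_mod_cast (hn i).ne'
  simp only [reflect, if_neg hi]
  rw [Nat.cast_sub (h i)]
  field_simp

lemma Gam_le {d : ℕ} {n : Fin (d + 1) → ℕ} {γ : Fin (d + 1) → ℕ} (h : γ ∈ Gam n)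
    (i : Fin (d + 1)) : γ i ≤ n i := by
  rcases h with h | h
  · exact (h.1 i).le
  · rw [Set.mem_singleton_iff] at h
    subst h
    by_cases hi : i = Fin.last d
    · subst hi; simp
    · simp [Function.update_of_ne hi]

lemma Gam_pair_le {d : ℕ} {n : Fin (d + 1) → ℕ} (hn : ∀ j, 0 < n j) {γ : Fin (d + 1) → ℕ}
    (h : γ ∈ Gam n) {i j : Fin (d + 1)} (hij : i ≠ j) :
    (γ i : ℝ) / n i + (γ j : ℝ) / n j ≤ 1 := by
  rcases h with h | h
  · exact (h.2 i j hij).le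
  · rw [Set.mem_singleton_iff] at h
    subst h
    have hl : (n (Fin.last d) : ℝ) ≠ 0 := by exact_mod_cast (hn _).ne'
    by_cases hi : i = Fin.last d
    · subst hi
      simp [Function.update_of_ne hij.symm, hl]
    · by_cases hj : j = Fin.last d
      · subst hj
        simp [Function.update_of_ne hij, hl]
      · simp [Function.update_of_ne hi, Function.update_of_ne hj]

lemma eq_zero_of_reflect_mem {d : ℕ} {n : Fin (d + 1) → ℕ} (hn : ∀ j, 0 < n j)
    {γ : Fin (d + 1) → ℕ} {s : Fin (d + 1) → ZMod 2} (hs : ∑ i, s i = 0)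
    (h : γ ∈ Gam n) (h' : reflect n s γ ∈ Gam n) : s = 0 := by
  by_contra hne
  obtain ⟨i, hi⟩ := Function.ne_iff.mp hne
  have hj : ∃ j, j ≠ i ∧ s j ≠ 0 := by
    by_contra! hall
    rw [Finset.sum_eq_single i (fun j _ hj => hall j hj) (by simp)] at hs
    exact hi hs
  obtain ⟨j, hji, hj⟩ := hj
  have hle := Gam_le h
  have e1 := reflect_div hn hle hi
  have e2 := reflect_div hn hle hj
  have p := Gam_pair_le hn h hji
  have p' := Gam_pair_le hn h' hji
  rcases id h with g | g
  · linarith [g.2 j i hji]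
  rcases id h' with g₂ | g₂
  · linarith [g₂.2 j i hji]
  -- Both points are the exceptional one; of `i`, `j`, at least one is not the last index, and there
  -- the exceptional point has coordinate `0`, which is not fixed by the reflection.
  rw [Set.mem_singleton_iff] at g g₂
  rw [g₂] at e1 e2
  rw [g] at e1 e2
  by_cases hl : i = Fin.last d
  · rw [hl] at hji
    simp [Function.update_of_ne hji] at e2
  · simp [Function.update_of_ne hl] at e1

/-- A fraction with denominator `a` that is also a fraction with a denominator coprime to `a` is
an integer. -/
lemma dvd_of_div_eq_div {a b x y : ℕ} (ha : 0 < a) (hb : 0 < b) (hab : Nat.Coprime a b)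
    (h : (x : ℝ) / a = (y : ℝ) / b) : a ∣ x := by
  have ha' : (a : ℝ) ≠ 0 := by exact_mod_cast ha.ne'
  have hb' : (b : ℝ) ≠ 0 := by exact_mod_cast hb.ne'
  rw [div_eq_div_iff ha' hb'] at h
  have h' : x * b = y * a := by exact_mod_cast h
  exact hab.dvd_of_dvd_mul_right ⟨y, by rw [h', mul_comm]⟩

/-- Ratios in `(0, 1/2]` with coprime denominators are distinct. -/
lemma div_ne_div {a b x y : ℕ} (ha : 0 < a) (hb : 0 < b) (hab : Nat.Coprime a b)
    (hpos : 0 < (x : ℝ) / a) (hhalf : (x : ℝ) / a ≤ 1 / 2) : (x : ℝ) / a ≠ (y : ℝ) / b := by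
  intro h
  have ha' : (0 : ℝ) < a := by exact_mod_cast ha
  obtain ⟨c, rfl⟩ := dvd_of_div_eq_div ha hb hab h
  push_cast at hpos hhalf
  rw [mul_div_cancel_left₀ _ ha'.ne'] at hpos hhalf
  have : 1 ≤ c := by exact_mod_cast hpos
  have : (1 : ℝ) ≤ c := by exact_mod_cast this
  linarith

lemma exists_reflect_mem {d : ℕ} {n : Fin (d + 1) → ℕ} (hn : ∀ j, 0 < n j)
    (hcop : ∀ i j, i ≠ j → Nat.Coprime (n i) (n j)) {x : Fin (d + 1) → ℕ}
    (hx : ∀ i, x i ≤ n i) (c : ZMod 2) :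
    ∃ s : Fin (d + 1) → ZMod 2, ∑ i, s i = c ∧ reflect n s x ∈ Gam n := by
  have hn' : ∀ i, (0 : ℝ) < n i := fun i => by exact_mod_cast hn i
  -- `s` reflects every coordinate into the lower half.
  obtain ⟨s, hs⟩ : ∃ s : Fin (d + 1) → ZMod 2, ∀ i, (reflect n s x i : ℝ) / n i ≤ 1 / 2 := by
    refine ⟨fun i => if (x i : ℝ) / n i ≤ 1 / 2 then 0 else 1, fun i => ?_⟩
    by_cases h : (x i : ℝ) / n i ≤ 1 / 2
    · simpa only [reflect, if_pos h, if_true] using h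
    · rw [reflect_div hn hx (by simp only [if_neg h]; decide)]
      linarith
  set y := reflect n s x with hy
  have hyle : ∀ i, y i ≤ n i := reflect_le hx
  have hlt : ∀ z : Fin (d + 1) → ℕ, ∀ i, (z i : ℝ) / n i < 1 → z i < n i := by
    intro z i h
    rw [div_lt_one (hn' i)] at h
    exact_mod_cast h
  have hnn : ∀ i, 0 ≤ (y i : ℝ) / n i := fun i => by positivity
  by_cases hc : ∑ i, s i = c
  · refine ⟨s, hc, Or.inl ⟨fun i => hlt _ i (by linarith [hs i]), fun i j hij => ?_⟩⟩
    have h1 := hs i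
    have h2 := hs j
    rcases h1.lt_or_eq with h | h
    · linarith
    · have := div_ne_div (y := y j) (hn i) (hn j) (hcop i j hij) (by rw [h]; norm_num) h1
      have := h2.lt_of_ne (fun h' => this (h.trans h'.symm))
      linarith
  · have hc' : 1 + ∑ i, s i = c :=
      (by decide : ∀ a b : ZMod 2, a ≠ b → 1 + a = b) _ _ hc
    have hsum : ∀ k, ∑ i, (Pi.single k 1 + s : Fin (d + 1) → ZMod 2) i = c := by
      intro k
      simp [Finset.sum_add_distrib, hc']
    obtain ⟨k, -, hk⟩ := Finset.exists_max_image Finset.univ (fun i => (y i : ℝ) / n i)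
      Finset.univ_nonempty
    have hk : ∀ i, (y i : ℝ) / n i ≤ (y k : ℝ) / n k := fun i => hk i (Finset.mem_univ i)
    rcases (hnn k).eq_or_lt with h0 | hpos
    · refine ⟨_, hsum (Fin.last d), Or.inr ?_⟩
      rw [← reflect_reflect _ _ hx, ← hy, Set.mem_singleton_iff]
      have hy0 : y = 0 := by
        funext i
        have h1 : (y i : ℝ) / n i = 0 := le_antisymm ((hk i).trans h0.symm.le) (hnn i)
        rcases div_eq_zero_iff.mp h1 with h | h
        · exact_mod_cast h
        · exact absurd h (hn' i).ne'
      rw [hy0]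
      funext i
      by_cases hi : i = Fin.last d
      · subst hi; simp [reflect]
      · simp [reflect, hi]
    · refine ⟨_, hsum k, Or.inl ?_⟩
      rw [← reflect_reflect _ _ hx, ← hy]
      have hstrict : ∀ i, i ≠ k → (y i : ℝ) / n i < (y k : ℝ) / n k := fun i hi =>
        (hk i).lt_of_ne (div_ne_div (hn k) (hn i) (hcop k i hi.symm) hpos (hs k)).symm
      have hzk : (reflect n (Pi.single k 1) y k : ℝ) / n k = 1 - (y k : ℝ) / n k :=
        reflect_div hn hyle (by simp)
      have hzi : ∀ i, i ≠ k → reflect n (Pi.single k 1) y i = y i := fun i hi => by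
        simp [reflect, hi]
      refine ⟨fun i => hlt _ i ?_, fun i j hij => ?_⟩
      · by_cases hi : i = k
        · subst hi; linarith
        · rw [hzi i hi]; linarith [hs i]
      · by_cases hi : i = k
        · subst hi
          rw [hzk, hzi j hij.symm]
          linarith [hstrict j hij.symm]
        · by_cases hj : j = k
          · subst hj
            rw [hzk, hzi i hij]
            linarith [hstrict i hij]
          · rw [hzi i hi, hzi j hj]
            linarith [hstrict i hi, hstrict j hj, hs k]

/-- Proposition 2.5: #Γ^{(n)} = ∏_i (n_i+1) / 2^{d−1}, stated multiplicatively
(here the dimension is d+1, so the power is 2^d). -/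
theorem stmt_10 {d : ℕ} (n : Fin (d + 1) → ℕ) (hn : ∀ j, 0 < n j)
    (hcop : ∀ i j, i ≠ j → Nat.Coprime (n i) (n j)) :
    (Gam n).ncard * 2 ^ d = ∏ i, (n i + 1) := by
  set B : Finset (Fin (d + 1) → ℕ) := Fintype.piFinset fun i => Finset.range (n i + 1) with hB
  have hmem : ∀ x, x ∈ B ↔ ∀ i, x i ≤ n i := fun x => by
    simp [hB, Fintype.mem_piFinset]
  have hfin : (Gam n).Finite := B.finite_toSet.subset fun γ hγ => (hmem γ).2 (Gam_le hγ)
  have hcard : (hfin.toFinset ×ˢ (Finset.univ : Finset (Fin (d + 1) → ZMod 2))).card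
      = (B ×ˢ (Finset.univ : Finset (ZMod 2))).card := by
    refine Finset.card_bij (fun p _ => (reflect n p.2 p.1, ∑ i, p.2 i)) ?_ ?_ ?_
    · rintro ⟨γ, s⟩ h
      simp only [Finset.mem_product, Finite.mem_toFinset, Finset.mem_univ, and_true] at h ⊢
      exact (hmem _).2 (reflect_le (Gam_le h))
    · rintro ⟨γ, s⟩ h ⟨γ', s'⟩ h' heq
      simp only [Finset.mem_product, Finite.mem_toFinset, Finset.mem_univ, and_true] at h h'
      simp only [Prod.mk.injEq] at heq
      obtain ⟨h1, h2⟩ := heq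
      have e : γ' = reflect n (s' + s) γ := by
        rw [← reflect_reflect _ _ (Gam_le h), h1, reflect_self _ (Gam_le h')]
      have hz : s' + s = 0 := by
        refine eq_zero_of_reflect_mem hn ?_ h (e ▸ h')
        simp only [Pi.add_apply, Finset.sum_add_distrib, h2]
        exact (by decide : ∀ a : ZMod 2, a + a = 0) _
      have hss : s = s' := add_left_cancel (hz.trans (add_self_zmod_two s').symm)
      rw [hz, reflect_zero] at e
      rw [e, hss]
    · rintro ⟨x, c⟩ h
      simp only [Finset.mem_product, Finset.mem_univ, and_true] at h
      have hx := (hmem x).1 h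
      obtain ⟨s, hs, hΓ⟩ := exists_reflect_mem hn hcop hx c
      refine ⟨(reflect n s x, s), by simpa using hΓ, ?_⟩
      rw [reflect_self s hx, hs]
  rw [Finset.card_product, Finset.card_product, ← Set.ncard_eq_toFinset_card _ hfin, hB,
    Fintype.card_piFinset] at hcard
  simp only [Finset.card_univ, Fintype.card_pi, ZMod.card, Finset.prod_const, Fintype.card_fin,
    Finset.card_range, pow_succ] at hcard
  linarith
end
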